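/- arXiv:1112.4071 — 12 statements merged into one kernel-verified Lean document; each statement's English description precedes it below -/
import Mathlib

section
/- Let n be a positive integer and let λ_1, …, λ_n be distinct real numbers with λ_j > −1/2 for all j. Define a_{j,n} = (∏_{l=1}^n (λ_j + λ_l + 1)) / (∏_{l=1, l≠j}^n (λ_j − λ_l)). Then for every k ∈ {1, …, n} it holds that ∑_{j=1}^n a_{j,n} / (λ_j + λ_k + 1) = 1. -/
open Finset

/-- The coefficients `a_{j,n}` of the Müntz polynomial `K_n`. -/
noncomputable def muntzA (lam : ℕ → ℝ) (n j : ℕ) : ℝ :=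
  (∏ l ∈ Finset.Icc 1 n, (lam j + lam l + 1)) /
    (∏ l ∈ (Finset.Icc 1 n).erase j, (lam j - lam l))

theorem muntz_system (n : ℕ) (hn : 1 ≤ n) (lam : ℕ → ℝ)
    (hpos : ∀ j ∈ Finset.Icc 1 n, lam j > -(1/2 : ℝ))
    (hdist : ∀ j ∈ Finset.Icc 1 n, ∀ k ∈ Finset.Icc 1 n, j ≠ k → lam j ≠ lam k) :
    ∀ k ∈ Finset.Icc 1 n, ∑ j ∈ Finset.Icc 1 n, muntzA lam n j / (lam j + lam k + 1) = 1 := by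
  intro k hk
  have hinj : Set.InjOn lam (Finset.Icc 1 n) := fun i hi j hj hij =>
    by_contra fun hne => hdist i hi j hj hne hij
  -- Lagrange interpolation at the `lam j` expresses the leading coefficient of this monic
  -- polynomial of degree `n - 1` as the required sum.
  let P := Lagrange.nodal ((Finset.Icc 1 n).erase k) fun l => -(lam l + 1)
  have hcard : #(Finset.Icc 1 n) = P.degree + 1 := by
    rw [Lagrange.degree_nodal, ← Finset.card_erase_add_one hk]
    push_cast
    rfl
  have hlead := Lagrange.leadingCoeff_eq_sum hinj hcard
  rw [Lagrange.nodal_monic.leadingCoeff] at hlead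
  refine (Finset.sum_congr rfl fun j hj => ?_).trans hlead.symm
  have hne : lam j + lam k + 1 ≠ 0 := by linarith [hpos j hj, hpos k hk]
  rw [muntzA, Lagrange.eval_nodal, ← Finset.mul_prod_erase _ _ hk, div_right_comm,
    mul_div_cancel_left₀ _ hne]
  congr 1
  exact Finset.prod_congr rfl fun l _ => by ring
end

section
/- Let n be a positive integer, let λ_1, …, λ_n be distinct real numbers with λ_j > −1/2, and let a_{j,n} = (∏_{l=1}^n (λ_j + λ_l + 1)) / (∏_{l=1, l≠j}^n (λ_j − λ_l)). Then for every real x with x ≠ −λ_j − 1 for all j ∈ {1, …, n}, one has ∏_{j=1}^n (x − λ_j)/(x + λ_j + 1) = 1 − ∑_{j=1}^n a_{j,n}/(x + λ_j + 1). -/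
open Finset

/-- Partial fraction expansion of a ratio of two monic split polynomials of equal degree whose
denominator has simple roots. -/
theorem prod_sub_div_sub_eq_one_add_sum {F ι : Type*} [Field F] [DecidableEq ι] {s : Finset ι}
    {u v : ι → F} (hv : Set.InjOn v s) {x : F} (hx : ∀ i ∈ s, x ≠ v i) :
    ∏ i ∈ s, (x - u i) / (x - v i) =
      1 + ∑ i ∈ s, (∏ l ∈ s, (v i - u l)) / (∏ l ∈ s.erase i, (v i - v l)) / (x - v i) := by
  have hdeg : (Lagrange.nodal s u - Lagrange.nodal s v).degree < #s := by
    rw [← Lagrange.degree_nodal (s := s) (v := u)]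
    refine Polynomial.degree_sub_lt_left ?_ Lagrange.nodal_ne_zero ?_
    · rw [Lagrange.degree_nodal, Lagrange.degree_nodal]
    · rw [Lagrange.nodal_monic.leadingCoeff, Lagrange.nodal_monic.leadingCoeff]
  have heval := congrArg (Polynomial.eval x) (Lagrange.eq_interpolate hv hdeg)
  rw [Lagrange.eval_interpolate_not_at_node _ hx, Polynomial.eval_sub, Lagrange.eval_nodal,
    Lagrange.eval_nodal, sub_eq_iff_eq_add'] at heval
  have hne : ∏ i ∈ s, (x - v i) ≠ 0 := prod_ne_zero_iff.2 fun i hi => sub_ne_zero.2 (hx i hi)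
  rw [prod_div_distrib, heval, add_div, div_self hne, mul_div_cancel_left₀ _ hne]
  congr 1
  refine sum_congr rfl fun i hi => ?_
  rw [Polynomial.eval_sub, Lagrange.eval_nodal_at_node hi, Lagrange.eval_nodal,
    Lagrange.nodalWeight, prod_inv_distrib]
  ring

theorem muntz_partial_fraction_identity (n : ℕ) (hn : 1 ≤ n) (lam : ℕ → ℝ)
    (hpos : ∀ j ∈ Finset.Icc 1 n, lam j > -(1/2 : ℝ))
    (hdist : ∀ j ∈ Finset.Icc 1 n, ∀ k ∈ Finset.Icc 1 n, j ≠ k → lam j ≠ lam k) :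
    ∀ x : ℝ, (∀ j ∈ Finset.Icc 1 n, x ≠ -lam j - 1) →
      ∏ j ∈ Finset.Icc 1 n, (x - lam j) / (x + lam j + 1)
        = 1 - ∑ j ∈ Finset.Icc 1 n, muntzA lam n j / (x + lam j + 1) := by
  intro x hx
  have hinj : Set.InjOn (fun j => -lam j - 1) (Finset.Icc 1 n) := by
    intro j hj k hk hjk
    by_contra hne
    exact hdist j hj k hk hne (by simpa using hjk)
  have hden (j : ℕ) : x - (-lam j - 1) = x + lam j + 1 := by ring
  have key := prod_sub_div_sub_eq_one_add_sum (u := lam) hinj hx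
  simp only [hden] at key
  rw [key, sub_eq_add_neg, ← sum_neg_distrib]
  congr 1
  refine sum_congr rfl fun j hj => ?_
  have hnum : ∏ l ∈ Finset.Icc 1 n, (-lam j - 1 - lam l) =
      (-1) ^ n * ∏ l ∈ Finset.Icc 1 n, (lam j + lam l + 1) := by
    rw [prod_congr rfl fun l _ => show -lam j - 1 - lam l = -(lam j + lam l + 1) by ring,
      prod_neg, Nat.card_Icc, Nat.add_sub_cancel]
  have hdiff : ∏ l ∈ (Finset.Icc 1 n).erase j, (-lam j - 1 - (-lam l - 1)) =
      (-1) ^ (n - 1) * ∏ l ∈ (Finset.Icc 1 n).erase j, (lam j - lam l) := by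
    rw [prod_congr rfl fun l _ => show -lam j - 1 - (-lam l - 1) = -(lam j - lam l) by ring,
      prod_neg, card_erase_of_mem hj, Nat.card_Icc, Nat.add_sub_cancel]
  have hpow : (-1 : ℝ) ^ n = (-1) ^ (n - 1) * -1 := by rw [← pow_succ, Nat.sub_add_cancel hn]
  rw [hnum, hdiff, hpow, mul_assoc, mul_div_mul_left _ _ (pow_ne_zero _ (by norm_num)), muntzA]
  ring
end

section
/- Let n be a positive integer, let λ_1, …, λ_n be distinct real numbers with λ_j > −1/2, and define K_n(x) = ∑_{j=1}^n a_{j,n} x^{λ_j} for x ∈ (0,1], where a_{j,n} = (∏_{l=1}^n (λ_j + λ_l + 1)) / (∏_{l=1, l≠j}^n (λ_j − λ_l)). Then K_n satisfies the self-reproduction equation K_n(x) = ∫_0^1 K_n(x·v) K_n(v) dv for every x ∈ (0,1]. -/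
open Finset MeasureTheory intervalIntegral

/-- The Müntz polynomial `K_n(x) = ∑_{j=1}^n a_{j,n} x^{λ_j}`. -/
noncomputable def muntzK (lam : ℕ → ℝ) (n : ℕ) (x : ℝ) : ℝ :=
  ∑ j ∈ Finset.Icc 1 n, muntzA lam n j * x ^ lam j

/-- The Müntz coefficients solve the Cauchy system `∑ₖ aₖ / (λⱼ + λₖ + 1) = 1`. -/
theorem sum_muntzA_div_add_eq_one {n : ℕ} {lam : ℕ → ℝ}
    (hinj : Set.InjOn lam (Finset.Icc 1 n))
    (hne : ∀ j ∈ Finset.Icc 1 n, ∀ k ∈ Finset.Icc 1 n, lam j + lam k + 1 ≠ 0)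
    {j : ℕ} (hj : j ∈ Finset.Icc 1 n) :
    ∑ k ∈ Finset.Icc 1 n, muntzA lam n k / (lam j + lam k + 1) = 1 := by
  have hn : 0 < #(Finset.Icc 1 n) := Finset.card_pos.2 ⟨j, hj⟩
  have hdeg : #(Finset.Icc 1 n) =
      (Lagrange.nodal ((Finset.Icc 1 n).erase j) fun l => -(lam l + 1)).degree + 1 := by
    rw [Lagrange.degree_nodal, Finset.card_erase_of_mem hj]
    norm_cast
    omega
  have hsum := Lagrange.leadingCoeff_eq_sum hinj hdeg
  rw [Lagrange.nodal_monic.leadingCoeff] at hsum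
  refine Eq.trans (Finset.sum_congr rfl fun k hk => ?_) hsum.symm
  rw [Lagrange.eval_nodal, muntzA, ← Finset.mul_prod_erase _ _ hj, div_right_comm,
    add_comm (lam k) (lam j), mul_div_cancel_left₀ _ (hne j hj k hk)]
  congr 1
  exact Finset.prod_congr rfl fun l _ => by ring

theorem muntzK_self_reproduction (n : ℕ) (hn : 1 ≤ n) (lam : ℕ → ℝ)
    (hpos : ∀ j ∈ Finset.Icc 1 n, lam j > -(1/2 : ℝ))
    (hdist : ∀ j ∈ Finset.Icc 1 n, ∀ k ∈ Finset.Icc 1 n, j ≠ k → lam j ≠ lam k) :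
    ∀ x ∈ Set.Ioc (0:ℝ) 1,
      muntzK lam n x = ∫ v in (0:ℝ)..1, muntzK lam n (x * v) * muntzK lam n v := by
  intro x hx
  have hgt : ∀ j ∈ Finset.Icc 1 n, ∀ k ∈ Finset.Icc 1 n, -1 < lam j + lam k :=
    fun j hj k hk => by linarith [hpos j hj, hpos k hk]
  have hinj : Set.InjOn lam (Finset.Icc 1 n) := fun j hj k hk h =>
    by_contra fun hjk => hdist j hj k hk hjk h
  have hprod : ∀ v ∈ Set.uIoc (0:ℝ) 1, muntzK lam n (x * v) * muntzK lam n v =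
      ∑ j ∈ Finset.Icc 1 n, ∑ k ∈ Finset.Icc 1 n,
        muntzA lam n j * x ^ lam j * muntzA lam n k * v ^ (lam j + lam k) := by
    intro v hv
    rw [Set.uIoc_of_le zero_le_one] at hv
    rw [muntzK, muntzK, Finset.sum_mul_sum]
    refine Finset.sum_congr rfl fun j _ => Finset.sum_congr rfl fun k _ => ?_
    rw [Real.mul_rpow hx.1.le hv.1.le, Real.rpow_add hv.1]
    ring
  have hint : ∀ j ∈ Finset.Icc 1 n, ∀ k ∈ Finset.Icc 1 n, IntervalIntegrable
      (fun v : ℝ => muntzA lam n j * x ^ lam j * muntzA lam n k * v ^ (lam j + lam k))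
      volume 0 1 := fun j hj k hk => (intervalIntegrable_rpow' (hgt j hj k hk)).const_mul _
  have hint_sum : ∀ j ∈ Finset.Icc 1 n, IntervalIntegrable
      (fun v : ℝ => ∑ k ∈ Finset.Icc 1 n,
        muntzA lam n j * x ^ lam j * muntzA lam n k * v ^ (lam j + lam k)) volume 0 1 :=
    fun j hj => by simpa only [Finset.sum_fn] using IntervalIntegrable.sum _ (hint j hj)
  rw [intervalIntegral.integral_congr_ae (.of_forall hprod),
    intervalIntegral.integral_finsetSum hint_sum, muntzK]
  refine Finset.sum_congr rfl fun j hj => ?_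
  rw [intervalIntegral.integral_finsetSum (hint j hj)]
  calc muntzA lam n j * x ^ lam j
      = muntzA lam n j * x ^ lam j *
          ∑ k ∈ Finset.Icc 1 n, muntzA lam n k / (lam j + lam k + 1) := by
        rw [sum_muntzA_div_add_eq_one hinj
          (fun i hi k hk => ne_of_gt (by linarith [hgt i hi k hk])) hj, mul_one]
    _ = _ := by
        rw [Finset.mul_sum]
        refine Finset.sum_congr rfl fun k hk => ?_
        have h := hgt j hj k hk
        rw [intervalIntegral.integral_const_mul, integral_rpow (Or.inl h), Real.one_rpow,
          Real.zero_rpow (by linarith), sub_zero]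
        ring
end

section
/- Let n be a positive integer, let λ_1, …, λ_n be distinct real numbers with λ_j > −1/2, and define K_n(x) = ∑_{j=1}^n a_{j,n} x^{λ_j} for x ∈ (0,1], where a_{j,n} = (∏_{l=1}^n (λ_j + λ_l + 1)) / (∏_{l=1, l≠j}^n (λ_j − λ_l)). Then ∫_0^1 K_n(v)^2 dv = K_n(1) = ∑_{j=1}^n a_{j,n}. -/
open Finset MeasureTheory intervalIntegral

/-- The sum over `j` of the values of a product of `#s - 1` monic linear factors at the nodes `v j`,
divided by the Lagrange denominators, equals `1`. -/
theorem sum_prod_erase_add_div_prod_erase_sub {ι F : Type*} [DecidableEq ι] [Field F]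
    {s : Finset ι} {v w : ι → F} (hv : Set.InjOn v s) {k : ι} (hk : k ∈ s) :
    ∑ j ∈ s, (∏ l ∈ s.erase k, (v j + w l)) / ∏ l ∈ s.erase j, (v j - v l) = 1 := by
  let P : Polynomial F := ∏ l ∈ s.erase k, (Polynomial.X + Polynomial.C (w l))
  have hmonic : P.Monic := Polynomial.monic_prod_of_monic _ _ fun l _ => Polynomial.monic_X_add_C _
  have hnat : P.natDegree = #s - 1 := by
    rw [Polynomial.natDegree_prod_of_monic _ _ fun l _ => Polynomial.monic_X_add_C _]
    simp [card_erase_of_mem hk]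
  have hcard : (#s : WithBot ℕ) = P.degree + 1 := by
    rw [Polynomial.degree_eq_natDegree hmonic.ne_zero, hnat]
    have : 0 < #s := card_pos.mpr ⟨k, hk⟩
    norm_cast
    omega
  have h := Lagrange.leadingCoeff_eq_sum hv hcard
  rw [hmonic.leadingCoeff] at h
  simpa [P, Polynomial.eval_prod] using h.symm

/-- The Müntz polynomial `K_n` reproduces the value `1` of `x ^ λ_k` at `x = 1`. -/
theorem sum_muntzA_div {n : ℕ} {lam : ℕ → ℝ}
    (hpos : ∀ j ∈ Finset.Icc 1 n, lam j > -(1/2 : ℝ)) (hinj : Set.InjOn lam (Finset.Icc 1 n))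
    {k : ℕ} (hk : k ∈ Finset.Icc 1 n) :
    ∑ j ∈ Finset.Icc 1 n, muntzA lam n j / (lam j + lam k + 1) = 1 := by
  refine (sum_congr rfl fun j hj => ?_).trans
    (sum_prod_erase_add_div_prod_erase_sub (w := fun l => lam l + 1) hinj hk)
  have hne : lam j + lam k + 1 ≠ 0 := by linarith [hpos j hj, hpos k hk]
  rw [muntzA, ← mul_prod_erase _ _ hk, div_right_comm, mul_div_cancel_left₀ _ hne]
  simp only [add_assoc]

/-- The squared `L²` norm of `K_n` as a quadratic form in its coefficients. -/
theorem integral_muntzK_sq {n : ℕ} {lam : ℕ → ℝ}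
    (hpos : ∀ j ∈ Finset.Icc 1 n, lam j > -(1/2 : ℝ)) :
    (∫ v in (0:ℝ)..1, (muntzK lam n v) ^ 2) = ∑ k ∈ Finset.Icc 1 n, ∑ j ∈ Finset.Icc 1 n,
      muntzA lam n k * (muntzA lam n j / (lam j + lam k + 1)) := by
  have hexp : ∀ k ∈ Finset.Icc 1 n, ∀ j ∈ Finset.Icc 1 n, -1 < lam j + lam k := fun k hk j hj => by
    linarith [hpos j hj, hpos k hk]
  have hintble : ∀ k ∈ Finset.Icc 1 n, ∀ j ∈ Finset.Icc 1 n, IntervalIntegrable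
      (fun v : ℝ => muntzA lam n k * muntzA lam n j * v ^ (lam j + lam k)) volume 0 1 :=
    fun k hk j hj => (intervalIntegrable_rpow' (hexp k hk j hj)).const_mul _
  have hcongr : (∫ v in (0:ℝ)..1, (muntzK lam n v) ^ 2) =
      ∫ v in (0:ℝ)..1, ∑ k ∈ Finset.Icc 1 n, ∑ j ∈ Finset.Icc 1 n,
        muntzA lam n k * muntzA lam n j * v ^ (lam j + lam k) := by
    refine integral_congr_ae (Filter.Eventually.of_forall fun v hv => ?_)
    rw [Set.uIoc_of_le zero_le_one] at hv
    rw [muntzK, sq, sum_mul_sum]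
    refine sum_congr rfl fun k _ => sum_congr rfl fun j _ => ?_
    rw [Real.rpow_add hv.1]
    ring
  rw [hcongr, integral_finsetSum fun k hk => by
    simpa only [sum_fn] using IntervalIntegrable.sum _ (hintble k hk)]
  refine sum_congr rfl fun k hk => ?_
  rw [integral_finsetSum (hintble k hk)]
  refine sum_congr rfl fun j hj => ?_
  have hne : lam j + lam k + 1 ≠ 0 := by linarith [hexp k hk j hj]
  rw [intervalIntegral.integral_const_mul, integral_rpow (Or.inl (hexp k hk j hj)),
    Real.one_rpow, Real.zero_rpow hne]
  ring

theorem muntzK_L2_norm (n : ℕ) (hn : 1 ≤ n) (lam : ℕ → ℝ)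
    (hpos : ∀ j ∈ Finset.Icc 1 n, lam j > -(1/2 : ℝ))
    (hdist : ∀ j ∈ Finset.Icc 1 n, ∀ k ∈ Finset.Icc 1 n, j ≠ k → lam j ≠ lam k) :
    (∫ v in (0:ℝ)..1, (muntzK lam n v) ^ 2) = muntzK lam n 1 ∧
      muntzK lam n 1 = ∑ j ∈ Finset.Icc 1 n, muntzA lam n j := by
  have hinj : Set.InjOn lam (Finset.Icc 1 n) := fun j hj k hk h =>
    by_contra fun hjk => hdist j hj k hk hjk h
  have hone : muntzK lam n 1 = ∑ j ∈ Finset.Icc 1 n, muntzA lam n j := by simp [muntzK]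
  refine ⟨?_, hone⟩
  rw [hone, integral_muntzK_sq hpos]
  refine sum_congr rfl fun k hk => ?_
  rw [← mul_sum, sum_muntzA_div hpos hinj hk, mul_one]
end

section
/- Let n be a positive integer, let λ_1, …, λ_n be distinct real numbers with λ_j > −1/2, let a_{j,n} = (∏_{l=1}^n (λ_j + λ_l + 1)) / (∏_{l=1, l≠j}^n (λ_j − λ_l)), and fix t > 0. Let M be the n×n real matrix with entries M_{l j} = t^{λ_l + λ_j + 1}/(λ_l + λ_j + 1), and let A be the n×n real matrix with entries A_{l j} = a_{l,n} a_{j,n} t^{−λ_l − λ_j − 1}/(λ_l + λ_j + 1). Then M is invertible and A is its inverse, i.e. M·A = A·M = I. -/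
open Finset Matrix

/-- Lagrange interpolation of `∏ m ∈ s.erase j, (X + v m + 1)` at the nodes `v k`,
evaluated at `-v l - 1`. -/
lemma sum_prod_erase_mul_nodalWeight {F ι : Type*} [Field F] [DecidableEq ι] {s : Finset ι}
    {v : ι → F} (hv : Set.InjOn v s) (hne : ∀ i ∈ s, ∀ j ∈ s, v i + v j + 1 ≠ 0) {l j : ι}
    (hl : l ∈ s) (hj : j ∈ s) :
    (∏ m ∈ s, (v l + v m + 1)) * ∑ k ∈ s, (∏ m ∈ s.erase j, (v k + v m + 1)) *
      Lagrange.nodalWeight s v k / (v l + v k + 1) =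
      if l = j then ∏ m ∈ s.erase j, (v j - v m) else 0 := by
  have hdeg : (Lagrange.nodal (s.erase j) fun m => -v m - 1).degree < #s := by
    rw [Lagrange.degree_nodal]
    exact_mod_cast Finset.card_erase_lt_of_mem hj
  have hx : ∀ i ∈ s, -v l - 1 ≠ v i := fun i hi h => hne l hl i hi (by linear_combination -h)
  have key := congrArg (Polynomial.eval (-v l - 1)) (Lagrange.eq_interpolate hv hdeg)
  rw [Lagrange.eval_interpolate_not_at_node _ hx] at key
  simp only [Lagrange.eval_nodal] at key
  have hnodal : ∏ m ∈ s, (-v l - 1 - v m) = (-1) ^ #s * ∏ m ∈ s, (v l + v m + 1) := by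
    rw [← Finset.prod_const, ← Finset.prod_mul_distrib]
    exact Finset.prod_congr rfl fun m _ => by ring
  have herase : ∏ m ∈ s.erase j, (-v l - 1 - (-v m - 1)) =
      (-1) ^ #(s.erase j) * ∏ m ∈ s.erase j, (v l - v m) := by
    rw [← Finset.prod_const, ← Finset.prod_mul_distrib]
    exact Finset.prod_congr rfl fun m _ => by ring
  have hsum : ∑ k ∈ s, Lagrange.nodalWeight s v k * (-v l - 1 - v k)⁻¹ *
      ∏ m ∈ s.erase j, (v k - (-v m - 1)) =
      -∑ k ∈ s, (∏ m ∈ s.erase j, (v k + v m + 1)) *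
        Lagrange.nodalWeight s v k / (v l + v k + 1) := by
    rw [← Finset.sum_neg_distrib]
    refine Finset.sum_congr rfl fun k _ => ?_
    rw [show -v l - 1 - v k = -(v l + v k + 1) by ring, inv_neg, div_eq_mul_inv,
      Finset.prod_congr rfl fun m _ => show v k - (-v m - 1) = v k + v m + 1 by ring]
    ring
  rw [hnodal, herase, hsum, ← Finset.card_erase_add_one hj, pow_succ] at key
  have hsign : ((-1 : F) ^ #(s.erase j)) ≠ 0 := pow_ne_zero _ (by simp)
  have key' := mul_left_cancel₀ hsign (key.trans (by ring :
    _ = (-1 : F) ^ #(s.erase j) * ((∏ m ∈ s, (v l + v m + 1)) *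
      ∑ k ∈ s, (∏ m ∈ s.erase j, (v k + v m + 1)) *
        Lagrange.nodalWeight s v k / (v l + v k + 1))))
  rw [← key']
  split_ifs with h
  · rw [h]
  · exact Finset.prod_eq_zero (Finset.mem_erase.2 ⟨h, hl⟩) (sub_self _)

lemma muntzA_mul_sum (n : ℕ) (lam : ℕ → ℝ) (hv : Set.InjOn lam (Finset.Icc 1 n))
    (hne : ∀ i ∈ Finset.Icc 1 n, ∀ j ∈ Finset.Icc 1 n, lam i + lam j + 1 ≠ 0) {l j : ℕ}
    (hl : l ∈ Finset.Icc 1 n) (hj : j ∈ Finset.Icc 1 n) :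
    muntzA lam n j * ∑ k ∈ Finset.Icc 1 n,
      muntzA lam n k / ((lam l + lam k + 1) * (lam k + lam j + 1)) =
      if l = j then 1 else 0 := by
  have key := sum_prod_erase_mul_nodalWeight hv hne hl hj
  have hprod : ∏ m ∈ Finset.Icc 1 n, (lam l + lam m + 1) ≠ 0 :=
    Finset.prod_ne_zero_iff.2 fun m hm => hne l hl m hm
  have hD : ∏ m ∈ (Finset.Icc 1 n).erase j, (lam j - lam m) ≠ 0 :=
    Finset.prod_ne_zero_iff.2 fun m hm => sub_ne_zero.2 fun h =>
      (Finset.mem_erase.1 hm).1 (hv (Finset.mem_erase.1 hm).2 hj h.symm)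
  have hsum : ∑ k ∈ Finset.Icc 1 n,
      muntzA lam n k / ((lam l + lam k + 1) * (lam k + lam j + 1)) =
      ∑ k ∈ Finset.Icc 1 n, (∏ m ∈ (Finset.Icc 1 n).erase j, (lam k + lam m + 1)) *
        Lagrange.nodalWeight (Finset.Icc 1 n) lam k / (lam l + lam k + 1) := by
    refine Finset.sum_congr rfl fun k hk => ?_
    have h := hne k hk j hj
    rw [muntzA, ← Finset.mul_prod_erase _ _ hj, Lagrange.nodalWeight, Finset.prod_inv_distrib]
    field_simp
  rw [hsum]
  split_ifs at key ⊢ with h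
  · subst h
    rw [muntzA, div_mul_eq_mul_div, key, div_self hD]
  · rw [(mul_eq_zero.1 key).resolve_left hprod, mul_zero]

theorem muntz_covariance_inverse (n : ℕ) (hn : 1 ≤ n) (lam : ℕ → ℝ)
    (hpos : ∀ j ∈ Finset.Icc 1 n, lam j > -(1/2 : ℝ))
    (hdist : ∀ j ∈ Finset.Icc 1 n, ∀ k ∈ Finset.Icc 1 n, j ≠ k → lam j ≠ lam k)
    (t : ℝ) (ht : 0 < t)
    (M A : Matrix (Fin n) (Fin n) ℝ)
    (hM : ∀ l j : Fin n, M l j =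
      t ^ (lam (l.1 + 1) + lam (j.1 + 1) + 1) / (lam (l.1 + 1) + lam (j.1 + 1) + 1))
    (hA : ∀ l j : Fin n, A l j =
      muntzA lam n (l.1 + 1) * muntzA lam n (j.1 + 1) *
        t ^ (-(lam (l.1 + 1)) - lam (j.1 + 1) - 1) / (lam (l.1 + 1) + lam (j.1 + 1) + 1)) :
    IsUnit M ∧ M * A = 1 ∧ A * M = 1 := by
  have hne : ∀ i ∈ Finset.Icc 1 n, ∀ j ∈ Finset.Icc 1 n, lam i + lam j + 1 ≠ 0 :=
    fun i hi j hj => by linarith [hpos i hi, hpos j hj]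
  have hv : Set.InjOn lam (Finset.Icc 1 n) := fun i hi j hj h => by
    by_contra hij
    exact hdist i hi j hj hij h
  have hmem : ∀ i : Fin n, i.1 + 1 ∈ Finset.Icc 1 n := fun i =>
    Finset.mem_Icc.2 ⟨by lia, i.2⟩
  have hMA : M * A = 1 := by
    ext l j
    have hterm : ∀ k : Fin n, M l k * A k j =
        t ^ (lam (l.1 + 1) - lam (j.1 + 1)) * (muntzA lam n (j.1 + 1) *
          (muntzA lam n (k.1 + 1) / ((lam (l.1 + 1) + lam (k.1 + 1) + 1) *
            (lam (k.1 + 1) + lam (j.1 + 1) + 1)))) := fun k => by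
      have hpow : t ^ (lam (l.1 + 1) - lam (j.1 + 1)) =
          t ^ (lam (l.1 + 1) + lam (k.1 + 1) + 1) *
            t ^ (-(lam (k.1 + 1)) - lam (j.1 + 1) - 1) := by
        rw [← Real.rpow_add ht]
        ring_nf
      rw [hM, hA, hpow, div_mul_div_comm]
      ring
    have hreindex : ∀ f : ℕ → ℝ, ∑ k : Fin n, f (k.1 + 1) = ∑ k ∈ Finset.Icc 1 n, f k :=
      fun f => by
        rw [Fin.sum_univ_eq_sum_range (fun k => f (k + 1)) n, Finset.range_eq_Ico,
          Finset.sum_Ico_add' f 0 n 1]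
        rfl
    rw [Matrix.mul_apply, Finset.sum_congr rfl fun k _ => hterm k, ← Finset.mul_sum,
      ← Finset.mul_sum,
      hreindex fun k => muntzA lam n k / ((lam (l.1 + 1) + lam k + 1) *
        (lam k + lam (j.1 + 1) + 1)),
      muntzA_mul_sum n lam hv hne (hmem l) (hmem j), Matrix.one_apply]
    by_cases h : l = j
    · simp [h]
    · simp [h, Fin.val_inj]
  have hAM : A * M = 1 := mul_eq_one_comm.1 hMA
  exact ⟨⟨⟨M, A, hMA, hAM⟩, rfl⟩, hMA, hAM⟩
end

section
/- Let λ_1, λ_2, … be distinct real numbers with λ_j > −1/2. For n ≥ 1 define K_n(x) = ∑_{j=1}^n a_{j,n} x^{λ_j} on (0,1], where a_{j,n} = (∏_{l=1}^n (λ_j + λ_l + 1)) / (∏_{l=1, l≠j}^n (λ_j − λ_l)), and define the Müntz–Legendre polynomials by L_1(x) = x^{λ_1} and, for k ≥ 2, L_k(x) = ∑_{j=1}^k c_{j,k} x^{λ_j} with c_{j,k} = (∏_{l=1}^{k−1} (λ_l + λ_j + 1)) / (∏_{l=1, l≠j}^k (λ_j − λ_l)). Then for every n ≥ 1 and every x ∈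 (0,1] one has K_n(x) = ∑_{j=1}^n (1 + 2λ_j) L_j(x); in particular K_n(1) = ∑_{j=1}^n (1 + 2λ_j). -/
open Finset

/-- The coefficients `c_{j,k}` of the Müntz–Legendre polynomial `L_k`.
For `k = 1` both products are empty, so `c_{1,1} = 1` and `L_1(x) = x^{λ_1}`. -/
noncomputable def muntzC (lam : ℕ → ℝ) (j k : ℕ) : ℝ :=
  (∏ l ∈ Finset.Icc 1 (k - 1), (lam l + lam j + 1)) /
    (∏ l ∈ (Finset.Icc 1 k).erase j, (lam j - lam l))

/-- The Müntz–Legendre polynomial `L_k(x) = ∑_{j=1}^k c_{j,k} x^{λ_j}`. -/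
noncomputable def muntzL (lam : ℕ → ℝ) (k : ℕ) (x : ℝ) : ℝ :=
  ∑ j ∈ Finset.Icc 1 k, muntzC lam j k * x ^ lam j

theorem muntzA_succ_self (lam : ℕ → ℝ) (n : ℕ) :
    muntzA lam (n + 1) (n + 1) = (1 + 2 * lam (n + 1)) * muntzC lam (n + 1) (n + 1) := by
  have hcomm : ∏ l ∈ Icc 1 n, (lam l + lam (n + 1) + 1)
      = ∏ l ∈ Icc 1 n, (lam (n + 1) + lam l + 1) :=
    prod_congr rfl fun l _ => by ring
  rw [muntzA, muntzC, prod_Icc_succ_top (by lia), Nat.add_sub_cancel, hcomm]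
  ring

theorem muntzA_succ_of_le {lam : ℕ → ℝ} {n j : ℕ} (hjn : j ≤ n)
    (hne : lam j ≠ lam (n + 1)) :
    muntzA lam (n + 1) j
      = muntzA lam n j + (1 + 2 * lam (n + 1)) * muntzC lam j (n + 1) := by
  have hcomm : ∏ l ∈ Icc 1 n, (lam l + lam j + 1) = ∏ l ∈ Icc 1 n, (lam j + lam l + 1) :=
    prod_congr rfl fun l _ => by ring
  have herase : (Icc 1 (n + 1)).erase j = insert (n + 1) ((Icc 1 n).erase j) := by
    ext l
    simp only [mem_erase, mem_Icc, mem_insert]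
    lia
  have hsub : lam j - lam (n + 1) ≠ 0 := sub_ne_zero.2 hne
  rw [muntzA, muntzA, muntzC, prod_Icc_succ_top (by lia), Nat.add_sub_cancel, hcomm, herase,
    prod_insert (by simp), mul_comm (lam j - lam (n + 1)), ← div_div, ← div_div]
  field_simp
  ring

theorem muntzK_succ {lam : ℕ → ℝ} {n : ℕ} (hne : ∀ j ∈ Icc 1 n, lam j ≠ lam (n + 1)) (x : ℝ) :
    muntzK lam (n + 1) x
      = muntzK lam n x + (1 + 2 * lam (n + 1)) * muntzL lam (n + 1) x := by
  have hsum : ∑ j ∈ Icc 1 n, muntzA lam (n + 1) j * x ^ lam j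
      = ∑ j ∈ Icc 1 n, muntzA lam n j * x ^ lam j
        + (1 + 2 * lam (n + 1)) * ∑ j ∈ Icc 1 n, muntzC lam j (n + 1) * x ^ lam j := by
    rw [mul_sum, ← sum_add_distrib]
    refine sum_congr rfl fun j hj => ?_
    rw [muntzA_succ_of_le (mem_Icc.1 hj).2 (hne j hj)]
    ring
  rw [muntzK, muntzK, muntzL, sum_Icc_succ_top (by lia), sum_Icc_succ_top (by lia), hsum,
    muntzA_succ_self]
  ring

theorem muntzK_eq_sum {lam : ℕ → ℝ} (hinj : Set.InjOn lam (Set.Ici 1)) (n : ℕ) (x : ℝ) :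
    muntzK lam n x = ∑ j ∈ Icc 1 n, (1 + 2 * lam j) * muntzL lam j x := by
  induction n with
  | zero => simp [muntzK]
  | succ n ih =>
    rw [sum_Icc_succ_top (by lia), ← ih]
    refine muntzK_succ (fun j hj => ?_) x
    rw [mem_Icc] at hj
    exact hinj.ne hj.1 (Set.mem_Ici.2 (by lia)) (by lia)

/-- `L_k(1)` is the leading coefficient of the monic polynomial `∏_{l < k} (X + λ_l + 1)`, recovered
by Lagrange interpolation at the nodes `λ_1, …, λ_k`. -/
theorem muntzL_one {lam : ℕ → ℝ} {k : ℕ} (hk : 1 ≤ k) (hinj : Set.InjOn lam (Icc 1 k)) :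
    muntzL lam k 1 = 1 := by
  set P : Polynomial ℝ := ∏ l ∈ Icc 1 (k - 1), (Polynomial.X + Polynomial.C (lam l + 1)) with hP
  have hmonic : P.Monic :=
    Polynomial.monic_prod_of_monic _ _ fun l _ => Polynomial.monic_X_add_C _
  have hnat : P.natDegree = k - 1 := by
    rw [hP, Polynomial.natDegree_prod_of_monic _ _ fun l _ => Polynomial.monic_X_add_C _]
    simp only [Polynomial.natDegree_X_add_C, sum_const, Nat.card_Icc]
    simp
  have hcard : (#(Icc 1 k) : WithBot ℕ) = P.degree + 1 := by
    rw [Polynomial.degree_eq_natDegree hmonic.ne_zero, hnat, Nat.card_Icc]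
    norm_cast
    lia
  refine Eq.trans ?_ ((Lagrange.leadingCoeff_eq_sum hinj hcard).symm.trans hmonic.leadingCoeff)
  refine sum_congr rfl fun j _ => ?_
  rw [Real.one_rpow, mul_one, muntzC, hP, Polynomial.eval_prod]
  congr 1
  refine prod_congr rfl fun l _ => ?_
  simp only [Polynomial.eval_add, Polynomial.eval_X, Polynomial.eval_C]
  ring

theorem muntzK_eq_sum_muntzLegendre (lam : ℕ → ℝ)
    (hpos : ∀ j, 1 ≤ j → lam j > -(1/2 : ℝ))
    (hdist : ∀ j k, 1 ≤ j → 1 ≤ k → j ≠ k → lam j ≠ lam k) :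
    ∀ n, 1 ≤ n →
      (∀ x ∈ Set.Ioc (0:ℝ) 1,
        muntzK lam n x = ∑ j ∈ Finset.Icc 1 n, (1 + 2 * lam j) * muntzL lam j x) ∧
      muntzK lam n 1 = ∑ j ∈ Finset.Icc 1 n, (1 + 2 * lam j) := by
  have hinj : Set.InjOn lam (Set.Ici 1) := fun j hj k hk hjk => by
    by_contra hne
    exact hdist j k hj hk hne hjk
  refine fun n _ => ⟨fun x _ => muntzK_eq_sum hinj n x, ?_⟩
  rw [muntzK_eq_sum hinj]
  refine sum_congr rfl fun j hj => ?_
  rw [muntzL_one (mem_Icc.1 hj).1 (hinj.mono fun l hl => (mem_Icc.1 hl).1), mul_one]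
end

section
/- Let λ_1, λ_2, … be distinct real numbers with λ_j > −1/2, let K_n(x) = ∑_{j=1}^n a_{j,n} x^{λ_j} with a_{j,n} = (∏_{l=1}^n (λ_j + λ_l + 1)) / (∏_{l=1, l≠j}^n (λ_j − λ_l)), and let L_n(x) = ∑_{j=1}^n c_{j,n} x^{λ_j} be the n-th Müntz–Legendre polynomial, with L_1(x) = x^{λ_1} and c_{j,n} = (∏_{l=1}^{n−1} (λ_l + λ_j + 1)) / (∏_{l=1, l≠j}^n (λ_j − λ_l)) for n ≥ 2. Then for every x > 0 one has L_n(x) = x^{−λ_n − 1} ∫_0^x s^{λ_n} K_n(s) ds. -/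
open Finset

theorem muntzA_eq_muntzC_mul (lam : ℕ → ℝ) {n : ℕ} (hn : 1 ≤ n) (j : ℕ) :
    muntzA lam n j = muntzC lam j n * (lam n + lam j + 1) := by
  obtain ⟨m, rfl⟩ : ∃ m, n = m + 1 := ⟨n - 1, by omega⟩
  simp only [muntzA, muntzC, Nat.add_sub_cancel]
  rw [Finset.prod_Icc_succ_top (by omega), div_mul_eq_mul_div]
  simp only [add_comm (lam j)]

theorem integral_rpow_mul_muntzK (lam : ℕ → ℝ) {μ : ℝ} {n : ℕ}
    (hμ : ∀ j ∈ Finset.Icc 1 n, -1 < μ + lam j) {x : ℝ} (hx : 0 < x) :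
    ∫ s in (0 : ℝ)..x, s ^ μ * muntzK lam n s =
      ∑ j ∈ Finset.Icc 1 n, muntzA lam n j * (x ^ (μ + lam j + 1) / (μ + lam j + 1)) := by
  have hcongr : ∫ s in (0 : ℝ)..x, s ^ μ * muntzK lam n s =
      ∫ s in (0 : ℝ)..x, ∑ j ∈ Finset.Icc 1 n, muntzA lam n j * s ^ (μ + lam j) := by
    refine intervalIntegral.integral_congr_ae (Filter.Eventually.of_forall fun s hs => ?_)
    rw [Set.uIoc_of_le hx.le] at hs
    rw [muntzK, Finset.mul_sum]
    refine Finset.sum_congr rfl fun j _ => ?_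
    rw [Real.rpow_add hs.1]
    ring
  rw [hcongr, intervalIntegral.integral_finsetSum fun j hj =>
    (intervalIntegral.intervalIntegrable_rpow' (hμ j hj)).const_mul _]
  refine Finset.sum_congr rfl fun j hj => ?_
  have hne : μ + lam j + 1 ≠ 0 := by linarith [hμ j hj]
  rw [intervalIntegral.integral_const_mul, integral_rpow (Or.inl (hμ j hj)),
    Real.zero_rpow hne, sub_zero]

theorem muntzL_eq_integral_muntzK (lam : ℕ → ℝ)
    (hpos : ∀ j, 1 ≤ j → lam j > -(1/2 : ℝ))
    (hdist : ∀ j k, 1 ≤ j → 1 ≤ k → j ≠ k → lam j ≠ lam k)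
    (n : ℕ) (hn : 1 ≤ n) :
    ∀ x : ℝ, 0 < x →
      muntzL lam n x =
        x ^ (-(lam n) - 1) * ∫ s in (0:ℝ)..x, s ^ lam n * muntzK lam n s := by
  intro x hx
  have hsum : ∀ j ∈ Finset.Icc 1 n, -1 < lam n + lam j := fun j hj => by
    linarith [hpos n hn, hpos j (Finset.mem_Icc.mp hj).1]
  rw [integral_rpow_mul_muntzK lam hsum hx, muntzL, Finset.mul_sum]
  refine Finset.sum_congr rfl fun j hj => ?_
  have hne : lam n + lam j + 1 ≠ 0 := by linarith [hsum j hj]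
  have hpow : x ^ lam j = x ^ (-(lam n) - 1) * x ^ (lam n + lam j + 1) := by
    rw [← Real.rpow_add hx]
    ring_nf
  rw [muntzA_eq_muntzC_mul lam hn, hpow]
  field_simp
end

section
/- Let λ_1, λ_2, … be distinct real numbers with λ_j > −1/2, and define K_n(x) = ∑_{j=1}^n a_{j,n} x^{λ_j} for x > 0, where a_{j,n} = (∏_{l=1}^n (λ_j + λ_l + 1)) / (∏_{l=1, l≠j}^n (λ_j − λ_l)), with convention K_0 ≡ 0. Then for every n ≥ 1 and every x > 0 the differential identity −λ_n K_n(x) + x K_n'(x) = (λ_n + 1) K_{n−1}(x) + x K_{n−1}'(x) holds. -/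
open Finset MeasureTheory intervalIntegral

/-- The Euler operator `x d/dx` multiplies the `j`-th term of `K_n` by `λ_j`. -/
theorem mul_deriv_muntzK (lam : ℕ → ℝ) (n : ℕ) {x : ℝ} (hx : 0 < x) :
    x * deriv (muntzK lam n) x =
      ∑ j ∈ Finset.Icc 1 n, lam j * (muntzA lam n j * x ^ lam j) := by
  have hderiv : HasDerivAt (muntzK lam n)
      (∑ j ∈ Finset.Icc 1 n, muntzA lam n j * (lam j * x ^ (lam j - 1))) x :=
    HasDerivAt.fun_sum fun j _ =>
      (Real.hasDerivAt_rpow_const (Or.inl hx.ne')).const_mul (muntzA lam n j)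
  rw [hderiv.deriv, Finset.mul_sum]
  refine Finset.sum_congr rfl fun j _ => ?_
  rw [Real.rpow_sub_one hx.ne']
  field_simp

/-- The recurrence `(λ_j - λ_{m+1}) a_{j,m+1} = (λ_j + λ_{m+1} + 1) a_{j,m}` for `j ≤ m`. -/
theorem sub_mul_muntzA_succ (lam : ℕ → ℝ) {m j : ℕ} (hj : j ≤ m)
    (hne : lam j ≠ lam (m + 1)) :
    (lam j - lam (m + 1)) * muntzA lam (m + 1) j =
      (lam j + lam (m + 1) + 1) * muntzA lam m j := by
  have hsub : lam j - lam (m + 1) ≠ 0 := sub_ne_zero.mpr hne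
  have hIcc : Finset.Icc 1 (m + 1) = insert (m + 1) (Finset.Icc 1 m) :=
    (Finset.insert_Icc_right_eq_Icc_succ (a := 1) (b := m) (by simp)).symm
  have hnotMem : m + 1 ∉ Finset.Icc 1 m := by simp
  unfold muntzA
  rw [hIcc, Finset.erase_insert_of_ne (by omega), Finset.prod_insert hnotMem,
    Finset.prod_insert (fun h => hnotMem (Finset.mem_of_mem_erase h)), mul_div_mul_comm,
    ← mul_assoc, mul_div_cancel₀ _ hsub]

theorem muntzK_differential_identity (lam : ℕ → ℝ)
    (hpos : ∀ j, 1 ≤ j → lam j > -(1/2 : ℝ))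
    (hdist : ∀ j k, 1 ≤ j → 1 ≤ k → j ≠ k → lam j ≠ lam k) :
    ∀ n, 1 ≤ n → ∀ x : ℝ, 0 < x →
      -(lam n) * muntzK lam n x + x * deriv (muntzK lam n) x =
        (lam n + 1) * muntzK lam (n - 1) x + x * deriv (muntzK lam (n - 1)) x := by
  intro n hn x hx
  obtain ⟨m, rfl⟩ : ∃ m, n = m + 1 := ⟨n - 1, by omega⟩
  rw [Nat.add_sub_cancel, mul_deriv_muntzK lam _ hx, mul_deriv_muntzK lam _ hx]
  simp only [muntzK, Finset.mul_sum, ← Finset.sum_add_distrib]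
  rw [Finset.sum_Icc_succ_top (by omega), neg_mul, neg_add_cancel, add_zero]
  refine Finset.sum_congr rfl fun j hj => ?_
  obtain ⟨hj1, hjm⟩ := Finset.mem_Icc.mp hj
  linear_combination x ^ lam j *
    sub_mul_muntzA_succ lam hjm (hdist j (m + 1) hj1 (by omega) (by omega))
end

section
/- Let n ≥ 1, let λ_1, …, λ_n be distinct real numbers with λ_j > −1/2, let L_1(x) = x^{λ_1} and, for k ≥ 2, L_k(x) = ∑_{j=1}^k c_{j,k} x^{λ_j} with c_{j,k} = (∏_{l=1}^{k−1} (λ_l + λ_j + 1)) / (∏_{l=1, l≠j}^k (λ_j − λ_l)). Fix t > 0 and define g_{n,t}(u,v) = (1/t) ∑_{l=1}^n (1 + 2λ_l) L_l(u/t) L_l(v/t) for u, v ∈ (0,t]. Then g_{n,t} reproduces the Müntz space spanned by x^{λ_1}, …, x^{λ_n}: for every j ∈ {1, …, n} and every u ∈ (0,t], ∫_0^t g_{n,t}(u,v) v^{λ_j} dv = u^{λ_j}. -/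
open Finset MeasureTheory intervalIntegral

/-- The reproducing kernel of the Müntz space `M_{n,t}` in `L²[0,t]`. -/
noncomputable def muntzKernel (lam : ℕ → ℝ) (n : ℕ) (t u v : ℝ) : ℝ :=
  (1 / t) * ∑ l ∈ Finset.Icc 1 n, (1 + 2 * lam l) * muntzL lam l (u / t) * muntzL lam l (v / t)

theorem erase_Icc_one_succ_self (k : ℕ) :
    (Finset.Icc 1 (k + 1)).erase (k + 1) = Finset.Icc 1 k := by
  ext x
  simp only [Finset.mem_erase, Finset.mem_Icc]
  omega

theorem prod_erase_Icc_one_succ (f : ℕ → ℝ) {j k : ℕ} (hjk : j ≤ k) :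
    ∏ l ∈ (Finset.Icc 1 (k + 1)).erase j, f l
      = (∏ l ∈ (Finset.Icc 1 k).erase j, f l) * f (k + 1) := by
  have h : (Finset.Icc 1 (k + 1)).erase j = insert (k + 1) ((Finset.Icc 1 k).erase j) := by
    ext x
    simp only [Finset.mem_erase, Finset.mem_insert, Finset.mem_Icc]
    omega
  rw [h, Finset.prod_insert (by simp), mul_comm]

theorem muntzC_succ_self (lam : ℕ → ℝ) (k : ℕ) :
    muntzC lam (k + 1) (k + 1) =
      (∏ l ∈ Finset.Icc 1 k, (lam l + lam (k + 1) + 1)) /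
        ∏ l ∈ Finset.Icc 1 k, (lam (k + 1) - lam l) := by
  rw [muntzC, erase_Icc_one_succ_self, Nat.add_sub_cancel]

theorem muntzC_succ_succ (lam : ℕ → ℝ) {j k : ℕ} (hjk : j ≤ k + 1) :
    muntzC lam j (k + 2) = muntzC lam j (k + 1) *
      ((lam (k + 1) + lam j + 1) / (lam j - lam (k + 2))) := by
  rw [muntzC, muntzC, prod_erase_Icc_one_succ _ hjk, div_mul_div_comm]
  congr 1
  rw [show k + 2 - 1 = k + 1 from rfl, Nat.add_sub_cancel,
    Finset.prod_Icc_succ_top (Nat.le_add_left 1 k)]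

/-- Partial fraction expansion of `∏_{l<k} (μ - λ_l) / ∏_{l≤k} (λ_l + μ + 1)`, whose residues are
the coefficients of the Müntz–Legendre polynomial `L_k`. -/
theorem sum_muntzC_div (lam : ℕ → ℝ) (k : ℕ)
    (hinj : Set.InjOn lam (Finset.Icc 1 (k + 1) : Finset ℕ)) (μ : ℝ)
    (hμ : ∀ j ∈ Finset.Icc 1 (k + 1), lam j + μ + 1 ≠ 0) :
    ∑ j ∈ Finset.Icc 1 (k + 1), muntzC lam j (k + 1) / (lam j + μ + 1) =
      (∏ l ∈ Finset.Icc 1 k, (μ - lam l)) / ∏ l ∈ Finset.Icc 1 (k + 1), (lam l + μ + 1) := by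
  induction k generalizing μ with
  | zero => simp [muntzC]
  | succ k ih =>
    have hsub : Finset.Icc 1 (k + 1) ⊆ Finset.Icc 1 (k + 2) :=
      Finset.Icc_subset_Icc_right (by omega)
    have hinj' : Set.InjOn lam (Finset.Icc 1 (k + 1) : Finset ℕ) :=
      hinj.mono (Finset.coe_subset.2 hsub)
    have hlast : k + 2 ∈ Finset.Icc 1 (k + 2) := by simp
    have hne : ∀ j ∈ Finset.Icc 1 (k + 1), lam j - lam (k + 2) ≠ 0 := fun j hj h => by
      have := hinj (hsub hj) hlast (sub_eq_zero.1 h)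
      simp only [Finset.mem_Icc] at hj
      omega
    have ih_pole := ih hinj' (-lam (k + 2) - 1) fun j hj h => hne j hj (by linarith)
    have ih_point := ih hinj' μ fun j hj => hμ j (hsub hj)
    have hw := hμ _ hlast
    have split : ∀ j ∈ Finset.Icc 1 (k + 1), muntzC lam j (k + 2) / (lam j + μ + 1) =
        (lam (k + 1) + lam (k + 2) + 1) / (lam (k + 2) + μ + 1) *
            (muntzC lam j (k + 1) / (lam j + (-lam (k + 2) - 1) + 1)) +
          (μ - lam (k + 1)) / (lam (k + 2) + μ + 1) *
            (muntzC lam j (k + 1) / (lam j + μ + 1)) := fun j hj => by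
      have h₁ := hne j hj
      have h₂ := hμ j (hsub hj)
      rw [muntzC_succ_succ lam (Finset.mem_Icc.1 hj).2,
        show lam j + (-lam (k + 2) - 1) + 1 = lam j - lam (k + 2) by ring]
      field_simp
      ring
    have hnum : ∏ l ∈ Finset.Icc 1 k, (-lam (k + 2) - 1 - lam l) =
        (-1) ^ k * ∏ l ∈ Finset.Icc 1 k, (lam l + lam (k + 2) + 1) := by
      rw [show (-1 : ℝ) ^ k = ∏ _l ∈ Finset.Icc 1 k, (-1 : ℝ) by simp, ← Finset.prod_mul_distrib]
      exact Finset.prod_congr rfl fun l _ => by ring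
    have hden : ∏ l ∈ Finset.Icc 1 (k + 1), (lam l + (-lam (k + 2) - 1) + 1) =
        (-1) ^ (k + 1) * ∏ l ∈ Finset.Icc 1 (k + 1), (lam (k + 2) - lam l) := by
      rw [show (-1 : ℝ) ^ (k + 1) = ∏ _l ∈ Finset.Icc 1 (k + 1), (-1 : ℝ) by simp,
        ← Finset.prod_mul_distrib]
      exact Finset.prod_congr rfl fun l _ => by ring
    have hD : ∏ l ∈ Finset.Icc 1 (k + 1), (lam (k + 2) - lam l) ≠ 0 :=
      Finset.prod_ne_zero_iff.2 fun l hl h => hne l hl (by linarith)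
    have hE : ∏ l ∈ Finset.Icc 1 (k + 1), (lam l + μ + 1) ≠ 0 :=
      Finset.prod_ne_zero_iff.2 fun l hl => hμ l (hsub hl)
    rw [Finset.sum_Icc_succ_top (by omega), Finset.sum_congr rfl split, Finset.sum_add_distrib,
      ← Finset.mul_sum, ← Finset.mul_sum, ih_pole, ih_point, muntzC_succ_self lam (k + 1), hnum,
      hden, pow_succ, Finset.prod_Icc_succ_top (b := k + 1) (by omega) fun l => lam l + μ + 1,
      Finset.prod_Icc_succ_top (b := k) (by omega) fun l => μ - lam l,
      Finset.prod_Icc_succ_top (b := k) (by omega) fun l => lam l + lam (k + 2) + 1]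
    field_simp
    ring

/-- Telescoping evaluation of the coefficient of `x ^ λ_i` in
`∑_{l≤m} (1 + 2λ_l) Q_l(μ) L_l(x)`, where `Q_l(μ) = ∫₀¹ L_l(x) x ^ μ dx`. -/
theorem sum_mul_muntzC_mul (lam : ℕ → ℝ) {i m : ℕ} (hi : 1 ≤ i) (him : i ≤ m)
    (hinj : Set.InjOn lam (Finset.Icc 1 m : Finset ℕ)) (μ : ℝ)
    (hμ : ∀ j ∈ Finset.Icc 1 m, lam j + μ + 1 ≠ 0) :
    ∑ l ∈ Finset.Icc i m, (1 + 2 * lam l) * muntzC lam i l *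
        ((∏ r ∈ Finset.Icc 1 (l - 1), (μ - lam r)) / ∏ r ∈ Finset.Icc 1 l, (lam r + μ + 1)) =
      (∏ r ∈ Finset.Icc 1 m, (lam r + lam i + 1)) / (∏ r ∈ Finset.Icc 1 m, (lam r + μ + 1)) *
        ((∏ r ∈ (Finset.Icc 1 m).erase i, (μ - lam r)) /
          ∏ r ∈ (Finset.Icc 1 m).erase i, (lam i - lam r)) := by
  induction m, him using Nat.le_induction with
  | base =>
    obtain ⟨k, rfl⟩ := Nat.exists_eq_add_of_le' hi
    rw [Finset.Icc_self, Finset.sum_singleton, muntzC_succ_self, erase_Icc_one_succ_self,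
      Nat.add_sub_cancel, Finset.prod_Icc_succ_top hi fun r => lam r + lam (k + 1) + 1]
    ring
  | succ m him ih =>
    have hsub : Finset.Icc 1 m ⊆ Finset.Icc 1 (m + 1) :=
      Finset.Icc_subset_Icc_right (by omega)
    have hi_mem : i ∈ Finset.Icc 1 m := Finset.mem_Icc.2 ⟨hi, him⟩
    have hlast : m + 1 ∈ Finset.Icc 1 (m + 1) := by simp
    have hne : lam i - lam (m + 1) ≠ 0 := fun h => by
      have := hinj (hsub hi_mem) hlast (sub_eq_zero.1 h)
      omega
    have hw := hμ _ hlast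
    rw [Finset.sum_Icc_succ_top (by omega),
      ih (hinj.mono (Finset.coe_subset.2 hsub)) fun j hj => hμ j (hsub hj), muntzC,
      Nat.add_sub_cancel, prod_erase_Icc_one_succ _ him, prod_erase_Icc_one_succ _ him,
      Finset.prod_Icc_succ_top (b := m) (by omega), Finset.prod_Icc_succ_top (b := m) (by omega),
      ← Finset.mul_prod_erase (Finset.Icc 1 m) (fun r => μ - lam r) hi_mem]
    have hE : ∏ r ∈ Finset.Icc 1 m, (lam r + μ + 1) ≠ 0 :=
      Finset.prod_ne_zero_iff.2 fun l hl => hμ l (hsub hl)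
    have hD : ∏ r ∈ (Finset.Icc 1 m).erase i, (lam i - lam r) ≠ 0 :=
      Finset.prod_ne_zero_iff.2 fun r hr h => by
        rw [Finset.mem_erase] at hr
        exact hr.1 (hinj (hsub hr.2) (hsub hi_mem) (sub_eq_zero.1 h).symm)
    field_simp
    ring

theorem intervalIntegrable_and_integral_div_rpow_mul_rpow {a b t : ℝ} (ht : 0 < t)
    (hab : -1 < a + b) :
    IntervalIntegrable (fun v : ℝ => (v / t) ^ a * v ^ b) volume 0 t ∧
      ∫ v in (0:ℝ)..t, (v / t) ^ a * v ^ b = t * t ^ b / (a + b + 1) := by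
  have heq : Set.EqOn (fun v : ℝ => (t ^ a)⁻¹ * v ^ (a + b)) (fun v => (v / t) ^ a * v ^ b)
      (Set.uIoc 0 t) := fun v hv => by
    rw [Set.uIoc_of_le ht.le] at hv
    simp only [Real.div_rpow hv.1.le ht.le, Real.rpow_add hv.1]
    ring
  refine ⟨((intervalIntegrable_rpow' hab).const_mul _).congr heq, ?_⟩
  rw [← intervalIntegral.integral_congr_ae (Filter.Eventually.of_forall heq),
    intervalIntegral.integral_const_mul, integral_rpow (Or.inl hab), Real.zero_rpow (by linarith),
    Real.rpow_add_one ht.ne', Real.rpow_add ht]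
  have := (Real.rpow_pos_of_pos ht a).ne'
  field_simp
  ring

theorem intervalIntegrable_and_integral_muntzL_mul_rpow (lam : ℕ → ℝ) (k : ℕ) {b t : ℝ}
    (ht : 0 < t) (hb : ∀ i ∈ Finset.Icc 1 k, -1 < lam i + b) :
    IntervalIntegrable (fun v : ℝ => muntzL lam k (v / t) * v ^ b) volume 0 t ∧
      ∫ v in (0:ℝ)..t, muntzL lam k (v / t) * v ^ b =
        t * t ^ b * ∑ i ∈ Finset.Icc 1 k, muntzC lam i k / (lam i + b + 1) := by
  have key := fun i hi => intervalIntegrable_and_integral_div_rpow_mul_rpow ht (hb i hi)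
  have hint : ∀ i ∈ Finset.Icc 1 k, IntervalIntegrable
      (fun v : ℝ => muntzC lam i k * ((v / t) ^ lam i * v ^ b)) volume 0 t :=
    fun i hi => (key i hi).1.const_mul _
  simp only [muntzL, Finset.sum_mul, mul_assoc]
  constructor
  · simpa only [Finset.sum_fn] using IntervalIntegrable.sum _ hint
  · rw [intervalIntegral.integral_finsetSum hint, ← mul_assoc, Finset.mul_sum]
    refine Finset.sum_congr rfl fun i hi => ?_
    rw [intervalIntegral.integral_const_mul, (key i hi).2]
    ring

/-- The Müntz–Legendre expansion of `x ^ λ_j`. -/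
theorem sum_muntzL_mul_eq_rpow (lam : ℕ → ℝ) (n : ℕ)
    (hinj : Set.InjOn lam (Finset.Icc 1 n : Finset ℕ)) {j : ℕ} (hj : j ∈ Finset.Icc 1 n)
    (hne : ∀ i ∈ Finset.Icc 1 n, lam i + lam j + 1 ≠ 0) (x : ℝ) :
    ∑ l ∈ Finset.Icc 1 n, (1 + 2 * lam l) * muntzL lam l x *
        (∑ i ∈ Finset.Icc 1 l, muntzC lam i l / (lam i + lam j + 1)) = x ^ lam j := by
  have hQ : ∀ l ∈ Finset.Icc 1 n, ∑ i ∈ Finset.Icc 1 l, muntzC lam i l / (lam i + lam j + 1) =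
      (∏ r ∈ Finset.Icc 1 (l - 1), (lam j - lam r)) /
        ∏ r ∈ Finset.Icc 1 l, (lam r + lam j + 1) := fun l hl => by
    rw [Finset.mem_Icc] at hl
    obtain ⟨k, rfl⟩ := Nat.exists_eq_add_of_le' hl.1
    have hsub : Finset.Icc 1 (k + 1) ⊆ Finset.Icc 1 n := Finset.Icc_subset_Icc_right hl.2
    exact sum_muntzC_div lam k (hinj.mono (Finset.coe_subset.2 hsub)) _
      fun i hi => hne i (hsub hi)
  have hswap : ∑ l ∈ Finset.Icc 1 n, (1 + 2 * lam l) * muntzL lam l x *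
        (∑ i ∈ Finset.Icc 1 l, muntzC lam i l / (lam i + lam j + 1)) =
      ∑ i ∈ Finset.Icc 1 n, x ^ lam i * ∑ l ∈ Finset.Icc i n, (1 + 2 * lam l) * muntzC lam i l *
        ((∏ r ∈ Finset.Icc 1 (l - 1), (lam j - lam r)) /
          ∏ r ∈ Finset.Icc 1 l, (lam r + lam j + 1)) := by
    simp only [Finset.mul_sum (Finset.Icc _ n)]
    rw [Finset.sum_comm' (t' := Finset.Icc 1 n) (s' := fun l => Finset.Icc 1 l)
      (by simp only [Finset.mem_Icc]; omega)]
    refine Finset.sum_congr rfl fun l hl => ?_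
    rw [hQ l hl, muntzL, Finset.mul_sum, Finset.sum_mul]
    exact Finset.sum_congr rfl fun i _ => by ring
  rw [hswap, Finset.sum_eq_single_of_mem j hj]
  · rw [sum_mul_muntzC_mul lam (Finset.mem_Icc.1 hj).1 (Finset.mem_Icc.1 hj).2 hinj _ hne,
      div_self (Finset.prod_ne_zero_iff.2 hne), div_self, mul_one, mul_one]
    refine Finset.prod_ne_zero_iff.2 fun r hr h => ?_
    rw [Finset.mem_erase] at hr
    exact hr.1 (hinj hr.2 hj (sub_eq_zero.1 h).symm)
  · intro i hi hij
    rw [sum_mul_muntzC_mul lam (Finset.mem_Icc.1 hi).1 (Finset.mem_Icc.1 hi).2 hinj _ hne,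
      Finset.prod_eq_zero (Finset.mem_erase.2 ⟨hij.symm, hj⟩) (sub_self (lam j))]
    simp

theorem muntz_reproducing_kernel (n : ℕ) (hn : 1 ≤ n) (lam : ℕ → ℝ)
    (hpos : ∀ j ∈ Finset.Icc 1 n, lam j > -(1/2 : ℝ))
    (hdist : ∀ j ∈ Finset.Icc 1 n, ∀ k ∈ Finset.Icc 1 n, j ≠ k → lam j ≠ lam k)
    (t : ℝ) (ht : 0 < t) :
    ∀ j ∈ Finset.Icc 1 n, ∀ u ∈ Set.Ioc (0:ℝ) t,
      (∫ v in (0:ℝ)..t, muntzKernel lam n t u v * v ^ lam j) = u ^ lam j := by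
  intro j hj u hu
  have hinj : Set.InjOn lam (Finset.Icc 1 n : Finset ℕ) := fun a ha b hb hab => by
    by_contra hne
    exact hdist a ha b hb hne hab
  have hgt : ∀ i ∈ Finset.Icc 1 n, -1 < lam i + lam j := fun i hi => by
    linarith [hpos i hi, hpos j hj]
  have key := fun l (hl : l ∈ Finset.Icc 1 n) =>
    intervalIntegrable_and_integral_muntzL_mul_rpow lam l ht fun i hi =>
      hgt i (Finset.Icc_subset_Icc_right (Finset.mem_Icc.1 hl).2 hi)
  have hexp : ∀ v, muntzKernel lam n t u v * v ^ lam j = ∑ l ∈ Finset.Icc 1 n,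
      (1 / t * ((1 + 2 * lam l) * muntzL lam l (u / t))) *
        (muntzL lam l (v / t) * v ^ lam j) := fun v => by
    rw [muntzKernel, Finset.mul_sum, Finset.sum_mul]
    exact Finset.sum_congr rfl fun l _ => by ring
  simp only [hexp]
  rw [intervalIntegral.integral_finsetSum fun l hl => (key l hl).1.const_mul _]
  calc _ = ∑ l ∈ Finset.Icc 1 n, t ^ lam j * ((1 + 2 * lam l) * muntzL lam l (u / t) *
        ∑ i ∈ Finset.Icc 1 l, muntzC lam i l / (lam i + lam j + 1)) :=
        Finset.sum_congr rfl fun l hl => by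
          rw [intervalIntegral.integral_const_mul, (key l hl).2]
          field_simp
    _ = t ^ lam j * (u / t) ^ lam j := by
        rw [← Finset.mul_sum, sum_muntzL_mul_eq_rpow lam n hinj hj fun i hi =>
          ne_of_gt (by linarith [hgt i hi])]
    _ = u ^ lam j := by
        rw [Real.div_rpow hu.1.le ht.le, mul_div_cancel₀ _ (Real.rpow_pos_of_pos ht _).ne']
end

section
/- Let n ≥ 1, let λ_1, …, λ_n be distinct real numbers with λ_j > −1/2, set p_j = λ_j + 1/2 > 0, and define K_n(x) = ∑_{j=1}^n a_{j,n} x^{λ_j} with a_{j,n} = (∏_{l=1}^n (λ_j + λ_l + 1)) / (∏_{l=1, l≠j}^n (λ_j − λ_l)), and ρ_n(x) = 1 − ∫_1^x K_n(1/r) (dr/r) for x ≥ 1. Then for every real ξ, ∫_0^∞ e^{iξt} e^{−t/2} ρ_n(e^t) dt = (1/(1/2 − iξ)) ∏_{j=1}^n (ξ − i p_j)/(ξ + i p_j), where i is the imaginary unit. -/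
open Finset MeasureTheory intervalIntegral

/-- `ρ_n(x) = 1 - ∫_1^x K_n(1/r) dr/r` for `x ≥ 1`. -/
noncomputable def muntzRho (lam : ℕ → ℝ) (n : ℕ) (x : ℝ) : ℝ :=
  1 - ∫ r in (1:ℝ)..x, muntzK lam n (1 / r) / r

/-- Partial fractions of `∏ (w - p_j) / (w + p_j)` when the poles `-p_j` are distinct. -/
lemma prod_sub_div_add_eq_one_sub_sum {ι F : Type*} [DecidableEq ι] [Field F] (s : Finset ι)
    (p : ι → F) (hp : Set.InjOn p s) (w : F) (hw : ∀ j ∈ s, w + p j ≠ 0) :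
    ∏ j ∈ s, (w - p j) / (w + p j) =
      1 - ∑ j ∈ s, ((∏ l ∈ s, (p j + p l)) / ∏ l ∈ s.erase j, (p j - p l)) / (w + p j) := by
  set v : ι → F := fun j => -p j with hv
  have hvs : Set.InjOn v s := fun a ha b hb h => hp ha hb (neg_injective h)
  set f : Polynomial F := Lagrange.nodal s v - Lagrange.nodal s p with hf
  have hdeg : f.degree < #s := by
    rw [← Lagrange.degree_nodal (s := s) (v := v)]
    exact Polynomial.degree_sub_lt_left (by rw [Lagrange.degree_nodal, Lagrange.degree_nodal])
      Lagrange.nodal_ne_zero (by rw [Lagrange.nodal_monic, Lagrange.nodal_monic])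
  have heval := congrArg (Polynomial.eval w)
    (Lagrange.eq_interpolate_of_eval_eq (fun j => f.eval (v j)) hvs hdeg fun _ _ => rfl)
  rw [Lagrange.eval_interpolate_not_at_node _ fun j hj h =>
    hw j hj (by simp [h, hv])] at heval
  have hne : ∏ j ∈ s, (w + p j) ≠ 0 := Finset.prod_ne_zero_iff.mpr hw
  have hsum : ∑ j ∈ s, Lagrange.nodalWeight s v j * (w - v j)⁻¹ * f.eval (v j) =
      ∑ j ∈ s, ((∏ l ∈ s, (p j + p l)) / ∏ l ∈ s.erase j, (p j - p l)) / (w + p j) := by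
    refine Finset.sum_congr rfl fun j hj => ?_
    have hfj : f.eval (v j) = -((-1) ^ #s * ∏ l ∈ s, (p j + p l)) := by
      rw [hf, Polynomial.eval_sub, Lagrange.eval_nodal_at_node hj, Lagrange.eval_nodal,
        ← Finset.prod_const, ← Finset.prod_mul_distrib, zero_sub]
      exact congrArg _ (Finset.prod_congr rfl fun l _ => by simp only [hv]; ring)
    have hwt : Lagrange.nodalWeight s v j =
        (-1) ^ #(s.erase j) * (∏ l ∈ s.erase j, (p j - p l))⁻¹ := by
      rw [Lagrange.nodalWeight, ← Finset.prod_const, ← Finset.prod_inv_distrib,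
        ← Finset.prod_mul_distrib]
      refine Finset.prod_congr rfl fun l _ => ?_
      rw [show v j - v l = -(p j - p l) by simp only [hv]; ring, inv_neg]
      ring
    have hsign : (-1 : F) ^ #(s.erase j) * (-1) ^ #(s.erase j) = 1 := by
      rw [← mul_pow]; simp
    rw [hfj, hwt, ← Finset.card_erase_add_one hj, pow_succ, show w - v j = w + p j by simp [hv]]
    linear_combination ((∏ l ∈ s, (p j + p l)) * (∏ l ∈ s.erase j, (p j - p l))⁻¹ *
      (w + p j)⁻¹) * hsign
  rw [hsum, hf, Polynomial.eval_sub, Lagrange.eval_nodal, Lagrange.eval_nodal] at heval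
  simp only [hv, sub_neg_eq_add] at heval
  rw [Finset.prod_div_distrib, div_eq_iff hne]
  linear_combination -heval

lemma integral_one_div_rpow_div {μ t : ℝ} (hμ : μ ≠ 0) :
    ∫ r in (1 : ℝ)..Real.exp t, (1 / r) ^ μ / r = (1 - Real.exp (-μ * t)) / μ := by
  have hpos : ∀ r ∈ Set.uIcc 1 (Real.exp t), 0 < r := fun r hr =>
    lt_of_lt_of_le (lt_min one_pos (Real.exp_pos t)) hr.1
  have hcongr : ∫ r in (1 : ℝ)..Real.exp t, (1 / r) ^ μ / r =
      ∫ r in (1 : ℝ)..Real.exp t, r ^ (-μ - 1) := by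
    refine integral_congr fun r hr => ?_
    have h := hpos r hr
    rw [Real.rpow_sub_one h.ne', one_div, Real.inv_rpow h.le, Real.rpow_neg h.le]
  rw [hcongr, integral_rpow (Or.inr ⟨fun h => hμ (by linarith), fun h => (hpos 0 h).false⟩),
    sub_add_cancel, Real.one_rpow, ← Real.exp_mul, mul_comm t, div_neg, ← neg_div, neg_sub]

lemma integral_one_div_rpow_zero_div (t : ℝ) :
    ∫ r in (1 : ℝ)..Real.exp t, (1 / r) ^ (0 : ℝ) / r = t := by
  simp only [Real.rpow_zero]
  rw [integral_one_div_of_pos one_pos (Real.exp_pos t), div_one, Real.log_exp]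

lemma integrableOn_exp_mul_id {σ : ℂ} (hσ : 0 < σ.re) :
    IntegrableOn (fun t : ℝ => Complex.exp (-σ * t) * (t : ℂ)) (Set.Ioi 0) := by
  refine (integrable_norm_iff (Continuous.aestronglyMeasurable (by fun_prop))).mp ?_
  refine IntegrableOn.congr_fun (integrableOn_rpow_mul_exp_neg_mul_rpow (s := 1) (p := 1)
    (by norm_num) one_pos hσ) (fun t ht => ?_) measurableSet_Ioi
  simp [Complex.norm_exp, abs_of_pos (Set.mem_Ioi.mp ht), mul_comm]

lemma integral_exp_mul_id {σ : ℂ} (hσ : 0 < σ.re) :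
    ∫ t in Set.Ioi (0 : ℝ), Complex.exp (-σ * t) * (t : ℂ) = 1 / (σ * σ) := by
  have hσ0 : σ ≠ 0 := fun h => by simp [h] at hσ
  have hderiv : ∀ t ∈ Set.Ici (0 : ℝ), HasDerivAt
      (fun t : ℝ => -(Complex.exp (-σ * t) * t / σ + Complex.exp (-σ * t) / (σ * σ)))
      (Complex.exp (-σ * t) * t) t := by
    intro t _
    have hid : HasDerivAt (fun t : ℝ => (t : ℂ)) 1 t := Complex.ofRealCLM.hasDerivAt
    have hexp := (hid.const_mul (-σ)).cexp
    convert! (((hexp.mul hid).div_const σ).add (hexp.div_const (σ * σ))).neg using 1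
    field_simp
    ring
  have hlim : ∀ s : ℝ, Filter.Tendsto (fun t : ℝ => t ^ s * Real.exp (-σ.re * t))
      Filter.atTop (nhds 0) := fun s => tendsto_rpow_mul_exp_neg_mul_atTop_nhds_zero s _ hσ
  have hlim0 : Filter.Tendsto (fun t : ℝ => Complex.exp (-σ * t)) Filter.atTop (nhds 0) := by
    rw [tendsto_zero_iff_norm_tendsto_zero]
    simpa [Complex.norm_exp] using hlim 0
  have hlim1 : Filter.Tendsto (fun t : ℝ => Complex.exp (-σ * t) * (t : ℂ))
      Filter.atTop (nhds 0) := by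
    rw [tendsto_zero_iff_norm_tendsto_zero]
    refine (hlim 1).congr' ?_
    filter_upwards [Filter.eventually_ge_atTop 0] with t ht
    simp [Complex.norm_exp, abs_of_nonneg ht, mul_comm]
  have htend := ((hlim1.div_const σ).add (hlim0.div_const (σ * σ))).neg
  rw [integral_Ioi_of_hasDerivAt_of_tendsto' hderiv (integrableOn_exp_mul_id hσ) htend]
  simp

/-- The Laplace transform of `t ↦ ∫_1^{e^t} r^{-μ} dr / r`. -/
lemma laplace_integral_one_div_rpow_div {σ : ℂ} {μ : ℝ} (hσ : 0 < σ.re) (hσμ : 0 < σ.re + μ) :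
    IntegrableOn (fun t : ℝ => Complex.exp (-σ * t) *
        ((∫ r in (1 : ℝ)..Real.exp t, (1 / r) ^ μ / r : ℝ) : ℂ)) (Set.Ioi 0) ∧
      ∫ t in Set.Ioi (0 : ℝ), Complex.exp (-σ * t) *
        ((∫ r in (1 : ℝ)..Real.exp t, (1 / r) ^ μ / r : ℝ) : ℂ) = 1 / (σ * (σ + μ)) := by
  rcases eq_or_ne μ 0 with rfl | hμ
  · simpa only [integral_one_div_rpow_zero_div, Complex.ofReal_zero, add_zero]
      using And.intro (integrableOn_exp_mul_id hσ) (integral_exp_mul_id hσ)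
  · have hre : (-σ).re < 0 := by simpa using hσ
    have hre' : (-(σ + μ)).re < 0 := by
      simp only [Complex.neg_re, Complex.add_re, Complex.ofReal_re]; linarith
    have hi := integrableOn_exp_mul_complex_Ioi hre 0
    have hi' := integrableOn_exp_mul_complex_Ioi hre' 0
    have hfun : (fun t : ℝ => Complex.exp (-σ * t) *
        ((∫ r in (1 : ℝ)..Real.exp t, (1 / r) ^ μ / r : ℝ) : ℂ)) =
        fun t : ℝ => (Complex.exp (-σ * t) - Complex.exp (-(σ + μ) * t)) / μ := by
      funext t
      rw [integral_one_div_rpow_div hμ, show -(σ + μ) * (t : ℂ) = -σ * t + -μ * t by ring,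
        Complex.exp_add]
      push_cast
      ring
    have hσ0 : σ ≠ 0 := fun h => by simp [h] at hσ
    have hσμ0 : σ + μ ≠ 0 := fun h => by simp [h] at hre'
    have hμ0 : (μ : ℂ) ≠ 0 := Complex.ofReal_ne_zero.mpr hμ
    rw [hfun]
    refine ⟨(hi.sub hi').div_const _, ?_⟩
    rw [MeasureTheory.integral_div, MeasureTheory.integral_sub hi hi',
      integral_exp_mul_complex_Ioi hre, integral_exp_mul_complex_Ioi hre']
    simp only [Complex.ofReal_zero, mul_zero, Complex.exp_zero]
    field_simp
    ring

lemma muntzRho_exp (lam : ℕ → ℝ) (n : ℕ) (t : ℝ) :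
    muntzRho lam n (Real.exp t) = 1 - ∑ j ∈ Finset.Icc 1 n,
      muntzA lam n j * ∫ r in (1 : ℝ)..Real.exp t, (1 / r) ^ lam j / r := by
  have hpos : ∀ r ∈ Set.uIcc 1 (Real.exp t), 0 < r := fun r hr =>
    lt_of_lt_of_le (lt_min one_pos (Real.exp_pos t)) hr.1
  simp only [muntzRho, muntzK, Finset.sum_div, mul_div_assoc]
  rw [intervalIntegral.integral_finsetSum]
  · simp only [intervalIntegral.integral_const_mul]
  · refine fun j _ => (ContinuousOn.intervalIntegrable fun r hr => ?_).const_mul _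
    have h := hpos r hr
    exact ((((continuousAt_const.div continuousAt_id h.ne').rpow_const
      (Or.inl (one_div_pos.mpr h).ne')).div continuousAt_id h.ne')).continuousWithinAt

theorem muntz_fourier_transform (n : ℕ) (hn : 1 ≤ n) (lam : ℕ → ℝ)
    (hpos : ∀ j ∈ Finset.Icc 1 n, lam j > -(1/2 : ℝ))
    (hdist : ∀ j ∈ Finset.Icc 1 n, ∀ k ∈ Finset.Icc 1 n, j ≠ k → lam j ≠ lam k) :
    ∀ ξ : ℝ,
      (∫ t in Set.Ioi (0:ℝ),
          Complex.exp (Complex.I * ξ * t) * Real.exp (-t / 2) * (muntzRho lam n (Real.exp t) : ℂ))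
        = (1 / ((1/2 : ℂ) - Complex.I * ξ)) *
            ∏ j ∈ Finset.Icc 1 n,
              ((ξ : ℂ) - Complex.I * (lam j + 1/2)) / ((ξ : ℂ) + Complex.I * (lam j + 1/2)) := by
  intro ξ
  set σ : ℂ := 1 / 2 - Complex.I * ξ with hσdef
  have hσre : σ.re = 1 / 2 := by simp [hσdef]
  have hσ : 0 < σ.re := by rw [hσre]; norm_num
  have hL := fun j (hj : j ∈ Finset.Icc 1 n) =>
    laplace_integral_one_div_rpow_div (σ := σ) (μ := lam j) hσ
      (by have := hpos j hj; rw [hσre]; linarith)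
  have hre : (-σ).re < 0 := by simpa using hσ
  have hfun : ∀ t : ℝ, Complex.exp (Complex.I * ξ * t) * Real.exp (-t / 2) *
      (muntzRho lam n (Real.exp t) : ℂ) = Complex.exp (-σ * t) - ∑ j ∈ Finset.Icc 1 n,
        (muntzA lam n j : ℂ) * (Complex.exp (-σ * t) *
          ((∫ r in (1 : ℝ)..Real.exp t, (1 / r) ^ lam j / r : ℝ) : ℂ)) := by
    intro t
    rw [muntzRho_exp, Complex.ofReal_exp, ← Complex.exp_add,
      show Complex.I * ξ * t + ((-t / 2 : ℝ) : ℂ) = -σ * t by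
        rw [hσdef]; push_cast; ring]
    rw [Complex.ofReal_sub, Complex.ofReal_sum, mul_sub, Finset.mul_sum, Complex.ofReal_one,
      mul_one]
    refine congrArg _ (Finset.sum_congr rfl fun j _ => ?_)
    rw [Complex.ofReal_mul]
    ring
  simp only [hfun]
  rw [MeasureTheory.integral_sub (integrableOn_exp_mul_complex_Ioi hre 0)
      (integrable_finsetSum _ fun j hj => (hL j hj).1.const_mul _),
    MeasureTheory.integral_finsetSum _ fun j hj => (hL j hj).1.const_mul _,
    integral_exp_mul_complex_Ioi hre]
  simp only [MeasureTheory.integral_const_mul]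
  rw [Finset.sum_congr rfl fun j hj => congrArg _ (hL j hj).2]
  have hne : ∀ j ∈ Finset.Icc 1 n, -Complex.I * ξ + ((lam j : ℂ) + 1 / 2) ≠ 0 := by
    intro j hj h
    have := hpos j hj
    have h' := congrArg Complex.re h
    simp at h'
    linarith
  have hprod : ∏ j ∈ Finset.Icc 1 n,
      ((ξ : ℂ) - Complex.I * (lam j + 1 / 2)) / ((ξ : ℂ) + Complex.I * (lam j + 1 / 2)) =
      ∏ j ∈ Finset.Icc 1 n, (-Complex.I * ξ - ((lam j : ℂ) + 1 / 2)) /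
        (-Complex.I * ξ + ((lam j : ℂ) + 1 / 2)) := by
    refine Finset.prod_congr rfl fun j _ => ?_
    rw [← mul_div_mul_left _ _ (neg_ne_zero.mpr Complex.I_ne_zero)]
    congr 1
    · linear_combination ((lam j : ℂ) + 1 / 2) * Complex.I_mul_I
    · linear_combination -((lam j : ℂ) + 1 / 2) * Complex.I_mul_I
  rw [hprod, prod_sub_div_add_eq_one_sub_sum _ _ _ _ hne, mul_sub, Finset.mul_sum]
  · congr 1
    · simp
    · refine Finset.sum_congr rfl fun j _ => ?_
      have hA : (muntzA lam n j : ℂ) =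
          (∏ l ∈ Finset.Icc 1 n, ((lam j : ℂ) + 1 / 2 + (lam l + 1 / 2))) /
            ∏ l ∈ (Finset.Icc 1 n).erase j, ((lam j : ℂ) + 1 / 2 - (lam l + 1 / 2)) := by
        rw [muntzA]
        push_cast
        congr 1 <;> exact Finset.prod_congr rfl fun l _ => by ring
      rw [← hA, show -Complex.I * ξ + ((lam j : ℂ) + 1 / 2) = σ + lam j by rw [hσdef]; ring,
        div_mul_div_comm, one_mul, mul_one_div]
  · intro j hj k hk h
    by_contra hjk
    exact hdist j hj k hk hjk (Complex.ofReal_injective (add_right_cancel h))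
end

section
/- Let n ≥ 1, let λ_1, …, λ_n be distinct real numbers with λ_j > −1/2, define K_n(x) = ∑_{j=1}^n a_{j,n} x^{λ_j} with a_{j,n} = (∏_{l=1}^n (λ_j + λ_l + 1)) / (∏_{l=1, l≠j}^n (λ_j − λ_l)), and ρ_n(x) = 1 − ∫_1^x K_n(1/r) (dr/r) for x ≥ 1. Then for every k ∈ {1, …, n}, ∫_0^1 u^{λ_k} ρ_n(1/u) du = 0. -/
open Finset MeasureTheory intervalIntegral

/-- For distinct nodes `v i`, `i ∈ s`, the coefficients of the Müntz polynomial solve the Cauchy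
system `∑ i, a i / (v i + v k + 1) = 1`. -/
lemma sum_prod_add_div_prod_sub_eq_one {ι : Type*} [DecidableEq ι] {s : Finset ι} {v : ι → ℝ}
    (hv : Set.InjOn v s) {k : ι} (hk : k ∈ s) :
    ∑ i ∈ s, (∏ l ∈ s.erase k, (v i + v l + 1)) / ∏ l ∈ s.erase i, (v i - v l) = 1 := by
  set P : Polynomial ℝ := ∏ l ∈ s.erase k, (Polynomial.X + Polynomial.C (v l + 1)) with hP
  have hmonic : P.Monic :=
    Polynomial.monic_prod_of_monic _ _ fun l _ ↦ Polynomial.monic_X_add_C (v l + 1)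
  have hdeg : P.degree = ((s.erase k).card : WithBot ℕ) := by
    simp only [hP, Polynomial.degree_prod, Polynomial.degree_X_add_C]
    simp
  have hcard : (s.card : WithBot ℕ) = P.degree + 1 := by
    rw [hdeg, ← Finset.card_erase_add_one hk]
    push_cast
    rfl
  have h := Lagrange.leadingCoeff_eq_sum hv hcard
  rw [hmonic.leadingCoeff] at h
  refine Eq.trans (Finset.sum_congr rfl fun i _ ↦ ?_) h.symm
  simp [hP, Polynomial.eval_prod, add_assoc]

lemma intervalIntegrable_one_div_rpow_div (lam : ℝ) {x : ℝ} (hx : 0 < x) :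
    IntervalIntegrable (fun r : ℝ ↦ (1 / r) ^ lam / r) volume 1 x := by
  refine ContinuousOn.intervalIntegrable fun r hr ↦ ContinuousAt.continuousWithinAt ?_
  have hr : r ≠ 0 := (lt_of_lt_of_le (lt_min one_pos hx) hr.1).ne'
  have : 1 / r ≠ 0 := one_div_ne_zero hr
  fun_prop (disch := simp_all)

lemma integral_one_div_rpow_div_s14 {lam : ℝ} (hlam : lam ≠ 0) {u : ℝ} (hu : 0 < u) :
    ∫ r in (1 : ℝ)..1 / u, (1 / r) ^ lam / r = (1 - u ^ lam) / lam := by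
  have hpos : ∀ r ∈ Set.uIcc 1 (1 / u), 0 < r := fun r hr ↦
    lt_of_lt_of_le (lt_min one_pos (one_div_pos.2 hu)) hr.1
  have hcongr : ∫ r in (1 : ℝ)..1 / u, (1 / r) ^ lam / r = ∫ r in (1 : ℝ)..1 / u, r ^ (-lam - 1) :=
    integral_congr fun r hr ↦ by
      simp only [one_div]
      rw [Real.rpow_sub_one (hpos r hr).ne', Real.rpow_neg (hpos r hr).le,
        Real.inv_rpow (hpos r hr).le]
  rw [hcongr, integral_rpow (Or.inr ⟨by simpa using hlam, fun h ↦ (hpos 0 h).false⟩),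
    sub_add_cancel, Real.one_rpow, one_div, Real.inv_rpow hu.le, Real.rpow_neg hu.le, inv_inv]
  field_simp
  ring

lemma continuousOn_rpow_mul_log {b : ℝ} (hb : 0 < b) :
    ContinuousOn (fun u : ℝ ↦ u ^ b * Real.log u) (Set.Ici 0) := by
  have h : ContinuousOn (fun u : ℝ ↦ u ^ b * Real.log (u ^ b) / b) (Set.Ici 0) :=
    ((Real.continuous_mul_log.comp (Real.continuous_rpow_const hb.le)).div_const b).continuousOn
  refine h.congr fun u hu ↦ ?_
  rcases (Set.mem_Ici.1 hu).eq_or_lt with rfl | hu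
  · simp [hb.ne']
  · simp only [Real.log_rpow hu]
    field_simp

lemma integral_rpow_mul_neg_log {a : ℝ} (ha : -1 < a) :
    IntervalIntegrable (fun u : ℝ ↦ u ^ a * -Real.log u) volume 0 1 ∧
      ∫ u in (0 : ℝ)..1, u ^ a * -Real.log u = 1 / (a + 1) ^ 2 := by
  have hb : 0 < a + 1 := by linarith
  let F : ℝ → ℝ := fun u ↦ u ^ (a + 1) / (a + 1) ^ 2 - u ^ (a + 1) * Real.log u / (a + 1)
  have hcont : ContinuousOn F (Set.Icc 0 1) :=
    ((Real.continuous_rpow_const hb.le).div_const _).continuousOn.sub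
      (((continuousOn_rpow_mul_log hb).mono Set.Icc_subset_Ici_self).div_const _)
  have hderiv : ∀ u ∈ Set.Ioo (0 : ℝ) 1, HasDerivAt F (u ^ a * -Real.log u) u := by
    intro u hu
    have hpow := Real.hasDerivAt_rpow_const (p := a + 1) (Or.inl hu.1.ne')
    convert! (hpow.div_const ((a + 1) ^ 2)).sub
      ((hpow.mul (Real.hasDerivAt_log hu.1.ne')).div_const (a + 1)) using 1
    have := hu.1.ne'
    rw [add_sub_cancel_right, Real.rpow_add_one hu.1.ne']
    field_simp
    ring
  have hnonneg : ∀ u ∈ Set.Ioo (0 : ℝ) 1, 0 ≤ u ^ a * -Real.log u := fun u hu ↦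
    mul_nonneg (Real.rpow_nonneg hu.1.le _) (neg_nonneg.2 (Real.log_nonpos hu.1.le hu.2.le))
  have hint : IntervalIntegrable (fun u : ℝ ↦ u ^ a * -Real.log u) volume 0 1 :=
    (intervalIntegrable_iff_integrableOn_Ioc_of_le zero_le_one).2
      (integrableOn_deriv_of_nonneg hcont hderiv hnonneg)
  refine ⟨hint, ?_⟩
  rw [integral_eq_sub_of_hasDerivAt_of_le zero_le_one hcont hderiv hint]
  simp [F, hb.ne']

lemma integral_rpow_mul_integral_one_div_rpow_div {a lam : ℝ} (ha : -1 < a) (hal : -1 < a + lam) :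
    IntervalIntegrable
        (fun u : ℝ ↦ u ^ a * ∫ r in (1 : ℝ)..1 / u, (1 / r) ^ lam / r) volume 0 1 ∧
      ∫ u in (0 : ℝ)..1, u ^ a * (∫ r in (1 : ℝ)..1 / u, (1 / r) ^ lam / r) =
        1 / ((a + 1) * (lam + a + 1)) := by
  have ha' : a + 1 ≠ 0 := by linarith
  have hal' : lam + a + 1 ≠ 0 := by linarith
  have hal'' : a + lam + 1 ≠ 0 := by linarith
  have transfer {g : ℝ → ℝ} {c : ℝ}
      (hg : ∀ u : ℝ, 0 < u → u ^ a * (∫ r in (1 : ℝ)..1 / u, (1 / r) ^ lam / r) = g u)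
      (h : IntervalIntegrable g volume 0 1 ∧ ∫ u in (0 : ℝ)..1, g u = c) :
      IntervalIntegrable
          (fun u : ℝ ↦ u ^ a * ∫ r in (1 : ℝ)..1 / u, (1 / r) ^ lam / r) volume 0 1 ∧
        ∫ u in (0 : ℝ)..1, u ^ a * (∫ r in (1 : ℝ)..1 / u, (1 / r) ^ lam / r) = c := by
    have hpos : ∀ u ∈ Set.uIoc (0 : ℝ) 1, 0 < u := fun u hu ↦ by
      rw [Set.uIoc_of_le zero_le_one] at hu
      exact hu.1
    refine ⟨h.1.congr fun u hu ↦ (hg u (hpos u hu)).symm, ?_⟩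
    rw [← h.2]
    exact integral_congr_ae (Filter.Eventually.of_forall fun u hu ↦ hg u (hpos u hu))
  rcases eq_or_ne lam 0 with rfl | hlam
  · refine transfer (g := fun u ↦ u ^ a * -Real.log u) (fun u hu ↦ ?_) ?_
    · simp only [Real.rpow_zero]
      rw [integral_one_div_of_pos one_pos (one_div_pos.2 hu)]
      simp
    · rw [zero_add, ← sq]
      exact integral_rpow_mul_neg_log ha
  · refine transfer (g := fun u ↦ (u ^ a - u ^ (a + lam)) / lam) (fun u hu ↦ ?_) ⟨?_, ?_⟩
    · rw [integral_one_div_rpow_div_s14 hlam hu, Real.rpow_add hu]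
      ring
    · exact ((intervalIntegrable_rpow' ha).sub (intervalIntegrable_rpow' hal)).div_const lam
    · rw [intervalIntegral.integral_div,
        intervalIntegral.integral_sub (intervalIntegrable_rpow' ha) (intervalIntegrable_rpow' hal),
        integral_rpow (Or.inl ha), integral_rpow (Or.inl hal), Real.zero_rpow ha',
        Real.zero_rpow hal'', Real.one_rpow, Real.one_rpow]
      field_simp
      ring

lemma muntzRho_eq_sum (lam : ℕ → ℝ) (n : ℕ) {x : ℝ} (hx : 0 < x) :
    muntzRho lam n x =
      1 - ∑ j ∈ Finset.Icc 1 n, muntzA lam n j * ∫ r in (1 : ℝ)..x, (1 / r) ^ lam j / r := by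
  simp only [muntzRho, muntzK, Finset.sum_div, mul_div_assoc]
  rw [intervalIntegral.integral_finsetSum fun j _ ↦
    (intervalIntegrable_one_div_rpow_div (lam j) hx).const_mul _]
  simp only [intervalIntegral.integral_const_mul]

lemma sum_muntzA_div_eq_one {n : ℕ} {lam : ℕ → ℝ}
    (hpos : ∀ j ∈ Finset.Icc 1 n, lam j > -(1/2 : ℝ))
    (hdist : ∀ j ∈ Finset.Icc 1 n, ∀ k ∈ Finset.Icc 1 n, j ≠ k → lam j ≠ lam k)
    {k : ℕ} (hk : k ∈ Finset.Icc 1 n) :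
    ∑ j ∈ Finset.Icc 1 n, muntzA lam n j / (lam j + lam k + 1) = 1 := by
  have hinj : Set.InjOn lam (Finset.Icc 1 n : Finset ℕ) := fun i hi j hj hij ↦
    by_contra fun hne ↦ hdist i hi j hj hne hij
  refine Eq.trans (Finset.sum_congr rfl fun j hj ↦ ?_) (sum_prod_add_div_prod_sub_eq_one hinj hk)
  have hne : lam j + lam k + 1 ≠ 0 := by linarith [hpos j hj, hpos k hk]
  rw [muntzA, ← Finset.mul_prod_erase _ _ hk, div_right_comm, mul_div_cancel_left₀ _ hne]

theorem muntzRho_orthogonality (n : ℕ) (hn : 1 ≤ n) (lam : ℕ → ℝ)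
    (hpos : ∀ j ∈ Finset.Icc 1 n, lam j > -(1/2 : ℝ))
    (hdist : ∀ j ∈ Finset.Icc 1 n, ∀ k ∈ Finset.Icc 1 n, j ≠ k → lam j ≠ lam k) :
    ∀ k ∈ Finset.Icc 1 n,
      (∫ u in (0:ℝ)..1, u ^ lam k * muntzRho lam n (1 / u)) = 0 := by
  intro k hk
  have hlk := hpos k hk
  have ha : -1 < lam k := by linarith
  have hterm := fun j (hj : j ∈ Finset.Icc 1 n) ↦
    integral_rpow_mul_integral_one_div_rpow_div (lam := lam j) ha (by linarith [hpos j hj])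
  have hexpand : ∫ u in (0 : ℝ)..1, u ^ lam k * muntzRho lam n (1 / u) =
      ∫ u in (0 : ℝ)..1, (u ^ lam k - ∑ j ∈ Finset.Icc 1 n,
        muntzA lam n j * (u ^ lam k * ∫ r in (1 : ℝ)..1 / u, (1 / r) ^ lam j / r)) := by
    refine integral_congr_ae (Filter.Eventually.of_forall fun u hu ↦ ?_)
    rw [Set.uIoc_of_le zero_le_one] at hu
    rw [muntzRho_eq_sum lam n (one_div_pos.2 hu.1), mul_sub, mul_one, Finset.mul_sum]
    simp only [mul_left_comm]
  have hsum : ∑ j ∈ Finset.Icc 1 n, muntzA lam n j * (1 / ((lam k + 1) * (lam j + lam k + 1))) =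
      1 / (lam k + 1) := by
    refine Eq.trans ?_ (congrArg (· / (lam k + 1)) (sum_muntzA_div_eq_one hpos hdist hk))
    simp only [Finset.sum_div, div_div, mul_one_div, mul_comm]
  have hint := fun j hj ↦ (hterm j hj).1.const_mul (muntzA lam n j)
  rw [hexpand, intervalIntegral.integral_sub (intervalIntegrable_rpow' ha)
      (by simpa only [Finset.sum_fn] using IntervalIntegrable.sum _ hint),
    intervalIntegral.integral_finsetSum hint, integral_rpow (Or.inl ha), Real.one_rpow,
    Real.zero_rpow (by linarith), sub_zero, ← hsum, sub_eq_zero]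
  refine Finset.sum_congr rfl fun j hj ↦ ?_
  rw [intervalIntegral.integral_const_mul, (hterm j hj).2]
end

section
/- Let λ > −1/2 and let ρ : [1,∞) → ℝ be absolutely continuous (ρ(x) = ρ(1) + ∫_1^x ρ'(u) du) with derivative ρ' satisfying ∫_1^∞ ρ'(u)² du < ∞, and suppose u^{−(λ+1)} ρ(u) → 0 as u → ∞ and ∫_1^∞ u^{−(λ+2)} ρ(u) du = 0. Then (1 + 2λ) ρ(1)² ≤ ∫_1^∞ ρ'(u)² du. -/
open MeasureTheory intervalIntegral Filter

/-- A function that is integrable on `(1, x]` for every `x` in a set `S` of such endpoints is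
a.e. strongly measurable on `S`. -/
lemma aestronglyMeasurable_restrict_of_forall_integrableOn_Ioc {f : ℝ → ℝ} {a : ℝ} {S : Set ℝ}
    (hS : ∀ x ∈ S, a < x ∧ IntegrableOn f (Set.Ioc a x)) :
    AEStronglyMeasurable f (volume.restrict S) := by
  have hloc : LocallyIntegrableOn f S := by
    intro x hx
    by_cases hmax : ∃ y ∈ S, x < y
    · obtain ⟨y, hy, hxy⟩ := hmax
      exact ⟨Set.Ioc a y, mem_nhdsWithin_of_mem_nhds (Ioc_mem_nhds (hS x hx).1 hxy), (hS y hy).2⟩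
    · push Not at hmax
      exact ⟨Set.Ioc a x,
        mem_of_superset self_mem_nhdsWithin fun z hz => ⟨(hS z hz).1, hmax z hz⟩, (hS x hx).2⟩
  exact hloc.aestronglyMeasurable

/-- Cauchy–Schwarz against a function whose square has integral `c⁻¹`. -/
lemma mul_sq_integral_mul_le_integral_sq {α : Type*} [MeasurableSpace α] {μ : Measure α}
    {f w : α → ℝ} {c : ℝ} (hc : 0 < c) (hf : MemLp f 2 μ) (hw : MemLp w 2 μ)
    (hwc : ∫ x, w x ^ 2 ∂μ = c⁻¹) :
    c * (∫ x, f x * w x ∂μ) ^ 2 ≤ ∫ x, f x ^ 2 ∂μ := by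
  set A := ∫ x, f x * w x ∂μ
  have hfw : Integrable (fun x => f x * w x) μ := hf.integrable_mul hw
  have hexpand : ∫ x, (f x - c * A * w x) ^ 2 ∂μ
      = ∫ x, f x ^ 2 ∂μ - 2 * (c * A) * A + (c * A) ^ 2 * c⁻¹ := by
    have hsq : ∀ x, (f x - c * A * w x) ^ 2
        = f x ^ 2 - 2 * (c * A) * (f x * w x) + (c * A) ^ 2 * w x ^ 2 := fun x => by ring
    simp only [hsq]
    have hsub : Integrable (fun x => f x ^ 2 - 2 * (c * A) * (f x * w x)) μ :=
      hf.integrable_sq.sub (hfw.const_mul _)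
    rw [integral_add hsub (hw.integrable_sq.const_mul _),
      integral_sub hf.integrable_sq (hfw.const_mul _), MeasureTheory.integral_const_mul,
      MeasureTheory.integral_const_mul, hwc]
  have hnonneg : 0 ≤ ∫ x, (f x - c * A * w x) ^ 2 ∂μ := integral_nonneg fun x => sq_nonneg _
  have hcancel : (c * A) ^ 2 * c⁻¹ = c * A ^ 2 := by field_simp
  rw [hexpand, hcancel] at hnonneg
  linarith

theorem muntz_cauchy_schwarz_step (lam : ℝ) (hlam : lam > -(1/2 : ℝ))
    (rho rho' : ℝ → ℝ)
    (habs : ∀ x : ℝ, 1 ≤ x → rho x = rho 1 + ∫ u in (1:ℝ)..x, rho' u)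
    (hL2 : IntegrableOn (fun u : ℝ => (rho' u) ^ 2) (Set.Ioi 1))
    (hdecay : Tendsto (fun u : ℝ => u ^ (-(lam + 1)) * rho u) atTop (nhds 0))
    (horth : (∫ u in Set.Ioi (1:ℝ), u ^ (-(lam + 2)) * rho u) = 0) :
    (1 + 2 * lam) * (rho 1) ^ 2 ≤ ∫ u in Set.Ioi (1:ℝ), (rho' u) ^ 2 := by
  -- `rho'` is not assumed measurable, so we work on the set `S` of endpoints up to which it is
  -- integrable; past `S` the integral in `habs` vanishes.
  set μ : Measure ℝ := volume.restrict (Set.Ioi 1) with hμ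
  set S : Set ℝ := {x | 1 < x ∧ IntegrableOn rho' (Set.Ioc 1 x)}
  have hSdown : ∀ {x y : ℝ}, y ∈ S → 1 < x → x ≤ y → x ∈ S := fun hy hx hxy =>
    ⟨hx, hy.2.mono_set (Set.Ioc_subset_Ioc_right hxy)⟩
  have hSmeas : MeasurableSet S :=
    Set.OrdConnected.measurableSet
      ⟨fun x hx y hy z hz => hSdown hy (hx.1.trans_le hz.1) hz.2⟩
  set g : ℝ → ℝ := S.indicator rho' with hg
  have hgmeas : AEStronglyMeasurable g μ :=
    ((aestronglyMeasurable_indicator_iff hSmeas).2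
      (aestronglyMeasurable_restrict_of_forall_integrableOn_Ioc fun x hx => hx)).mono_measure
      Measure.restrict_le_self
  have hgle : ∀ x, g x ^ 2 ≤ rho' x ^ 2 := by
    intro x
    by_cases hx : x ∈ S
    · simp [hg, hx]
    · simpa [hg, hx] using sq_nonneg (rho' x)
  have hgsq : Integrable (fun x => g x ^ 2) μ :=
    hL2.mono' (hgmeas.pow 2) (ae_of_all _ fun x => by
      simpa only [Real.norm_eq_abs, abs_of_nonneg (sq_nonneg (g x))] using hgle x)
  have hgL2 : MemLp g 2 μ := (memLp_two_iff_integrable_sq hgmeas).2 hgsq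
  set w : ℝ → ℝ := fun s => s ^ (-(lam + 1)) with hw
  have hwmeas : AEStronglyMeasurable w μ :=
    (measurable_id.pow_const (-(lam + 1))).aestronglyMeasurable
  have hwsq : ∀ s ∈ Set.Ioi (1:ℝ), s ^ (-(2 * lam + 2)) = w s ^ 2 := by
    intro s hs
    have hs0 : (0:ℝ) ≤ s := zero_le_one.trans (le_of_lt hs)
    rw [hw, ← Real.rpow_mul_natCast hs0]
    congr 1
    push_cast
    ring
  have hwL2 : MemLp w 2 μ := by
    refine (memLp_two_iff_integrable_sq hwmeas).2 ?_
    exact (integrableOn_Ioi_rpow_of_lt (a := -(2 * lam + 2)) (by linarith)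
      one_pos).congr_fun hwsq measurableSet_Ioi
  have hwint : ∫ s, w s ^ 2 ∂μ = (1 + 2 * lam)⁻¹ := by
    rw [hμ, ← setIntegral_congr_fun measurableSet_Ioi hwsq,
      integral_Ioi_rpow_of_lt (by linarith) one_pos, Real.one_rpow, neg_div, ← div_neg, one_div]
    congr 1
    ring
  have hkint : ∀ s : ℝ, 1 ≤ s → IntegrableOn (fun u : ℝ => u ^ (-(lam + 2))) (Set.Ioi s) :=
    fun s hs => integrableOn_Ioi_rpow_of_lt (by linarith) (by linarith)
  have hkval : ∀ s : ℝ, 1 ≤ s → ∫ u in Set.Ioi s, u ^ (-(lam + 2)) = w s / (lam + 1) := by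
    intro s hs
    rw [integral_Ioi_rpow_of_lt (by linarith) (by linarith), neg_div, ← div_neg, hw]
    congr 2 <;> ring
  set D : Set (ℝ × ℝ) := {p | p.2 < p.1 ∧ p.1 ∈ S} with hD
  have hDmeas : MeasurableSet D :=
    (measurableSet_lt measurable_snd measurable_fst).inter (measurable_fst hSmeas)
  set F : ℝ × ℝ → ℝ := D.indicator fun p => p.1 ^ (-(lam + 2)) * g p.2 with hF
  have hFmeas : AEStronglyMeasurable F (μ.prod μ) := by
    refine AEStronglyMeasurable.indicator (AEStronglyMeasurable.mul ?_ hgmeas.comp_snd) hDmeas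
    exact (measurable_fst.pow_const (-(lam + 2))).aestronglyMeasurable
  have hFle : ∀ s, ∀ᵐ u ∂μ,
      ‖F (u, s)‖ ≤ (Set.Ioi s).indicator (fun u => u ^ (-(lam + 2))) u * |g s| := by
    intro s
    filter_upwards [ae_restrict_mem measurableSet_Ioi] with u hu
    have hpow : (0:ℝ) ≤ u ^ (-(lam + 2)) :=
      Real.rpow_nonneg (zero_le_one.trans (le_of_lt hu)) _
    by_cases hsu : s < u
    · by_cases huS : u ∈ S
      · have hFu : F (u, s) = u ^ (-(lam + 2)) * g s := by simp [hF, hD, hsu, huS]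
        rw [hFu, norm_mul, Real.norm_of_nonneg hpow, Real.norm_eq_abs,
          Set.indicator_of_mem (Set.mem_Ioi.2 hsu)]
      · simpa [hF, hD, hsu, huS] using mul_nonneg hpow (abs_nonneg (g s))
    · simp [hF, hD, hsu]
  have hdom : ∀ s,
      Integrable (fun u => (Set.Ioi s).indicator (fun u => u ^ (-(lam + 2))) u * |g s|) μ :=
    fun s => (IntegrableOn.indicator (hkint 1 le_rfl) measurableSet_Ioi).mul_const _
  have hdomval : ∀ s, 1 ≤ s →
      ∫ u, (Set.Ioi s).indicator (fun u => u ^ (-(lam + 2))) u * |g s| ∂μ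
        = |g s| * w s / (lam + 1) := by
    intro s hs
    rw [MeasureTheory.integral_mul_const, MeasureTheory.integral_indicator measurableSet_Ioi, hμ,
      Measure.restrict_restrict measurableSet_Ioi,
      Set.inter_eq_left.2 (Set.Ioi_subset_Ioi hs), hkval s hs]
    ring
  have hslice : ∀ᵐ s ∂μ, ∫ u, ‖F (u, s)‖ ∂μ ≤ |g s| * w s / (lam + 1) := by
    filter_upwards [ae_restrict_mem measurableSet_Ioi] with s hs
    rw [← hdomval s (le_of_lt hs)]
    exact integral_mono_of_nonneg (ae_of_all _ fun u => norm_nonneg _)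
      (hdom s) (hFle s)
  have hgw : Integrable (fun s => |g s| * w s / (lam + 1)) μ :=
    (MemLp.integrable_mul hgL2.abs hwL2).div_const _
  have hFint : Integrable F (μ.prod μ) := by
    refine (integrable_prod_iff' hFmeas).2 ⟨?_, ?_⟩
    · filter_upwards [ae_restrict_mem measurableSet_Ioi, hFmeas.prodMk_right] with s hs hm
      exact (hdom s).mono' hm (hFle s)
    · refine hgw.mono' hFmeas.norm.prod_swap.integral_prod_right' ?_
      filter_upwards [hslice] with s hs
      rwa [Real.norm_of_nonneg (integral_nonneg fun u => norm_nonneg _)]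
  have hrho : ∀ u ∈ Set.Ioi (1:ℝ),
      u ^ (-(lam + 2)) * rho u = u ^ (-(lam + 2)) * rho 1 + ∫ s, F (u, s) ∂μ := by
    intro u hu
    rw [habs u (le_of_lt hu), mul_add]
    congr 1
    by_cases huS : u ∈ S
    · have hFu : ∀ s, F (u, s) = u ^ (-(lam + 2)) * (Set.Iio u).indicator g s := by
        intro s
        by_cases hsu : s < u <;> simp [hF, hD, hsu, huS]
      simp only [hFu]
      rw [MeasureTheory.integral_const_mul, MeasureTheory.integral_indicator measurableSet_Iio, hμ,
        Measure.restrict_restrict measurableSet_Iio, Set.Iio_inter_Ioi,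
        integral_of_le (le_of_lt hu), integral_Ioc_eq_integral_Ioo]
      congr 1
      refine setIntegral_congr_fun measurableSet_Ioo fun s hs => ?_
      simp [hg, hSdown huS hs.1 hs.2.le]
    · have hni : ¬ IntegrableOn rho' (Set.Ioc 1 u) := fun h => huS ⟨hu, h⟩
      rw [integral_of_le (le_of_lt hu), MeasureTheory.integral_undef hni]
      simp [hF, hD, huS]
  have hzero : rho 1 / (lam + 1) + ∫ s, ∫ u, F (u, s) ∂μ ∂μ = 0 := by
    rw [setIntegral_congr_fun measurableSet_Ioi hrho,
      integral_add ((hkint 1 le_rfl).mul_const _) hFint.integral_prod_left,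
      MeasureTheory.integral_mul_const, hkval 1 le_rfl, hw] at horth
    rw [← integral_integral_swap (f := fun u s => F (u, s)) hFint, ← horth]
    simp only [Real.one_rpow]
    ring
  have hbound : |rho 1| ≤ ∫ s, |g s| * w s ∂μ := by
    have hl : 0 < lam + 1 := by linarith
    have h : |∫ s, ∫ u, F (u, s) ∂μ ∂μ| ≤ ∫ s, |g s| * w s / (lam + 1) ∂μ :=
      norm_integral_le_of_norm_le hgw <| by
        filter_upwards [hslice] with s hs
        exact (MeasureTheory.norm_integral_le_integral_norm _).trans hs
    rw [← neg_eq_of_add_eq_zero_right hzero, abs_neg, abs_div, abs_of_pos hl,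
      MeasureTheory.integral_div] at h
    exact (div_le_div_iff_of_pos_right hl).1 h
  have hc : 0 < 1 + 2 * lam := by linarith
  calc (1 + 2 * lam) * rho 1 ^ 2
      ≤ (1 + 2 * lam) * (∫ s, |g s| * w s ∂μ) ^ 2 := by
        rw [← sq_abs (rho 1)]
        gcongr
    _ ≤ ∫ s, |g s| ^ 2 ∂μ := mul_sq_integral_mul_le_integral_sq hc hgL2.abs hwL2 hwint
    _ ≤ ∫ u, rho' u ^ 2 ∂μ := by
        simp only [sq_abs]
        exact integral_mono hgsq hL2 hgle
end
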